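/- Let K be a number field with ring of integers O_K, let 𝔭 ⊊ O_K be a proper ideal, and fix an integer i ≥ 0 and a field k. Then there exists a polynomial P(T) with rational coefficients and an integer N such that for all n ≥ N, the dimension over k of the group homology H_i(Γ_n(𝔭); k) (with trivial coefficients in k) equals P(n). -/

import Mathlib

open CategoryTheory AlgebraicTopology

/-- The simplicial `k`-module of chains on the nerve of the one-object category `BG`. -/
noncomputable def barChains (k : Type) [CommRing k] (G : Type) [Group G] :
    SimplicialObject (ModuleCat k) :=
  ((SimplicialObject.whiskering (Type) (ModuleCat k)).obj (ModuleCat.free k)).obj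
    (CategoryTheory.nerve (CategoryTheory.SingleObj G))

/-- Group homology `H_i(G; k)` with trivial coefficients in `k`, defined as the `i`-th
homology of the complex of simplicial chains on the classifying space of `G` (the nerve
of the one-object category `BG`). -/
noncomputable def grpHomology (k : Type) [CommRing k] (G : Type) [Group G] (i : ℕ) :
    ModuleCat k :=
  (HomologicalComplex.homologyFunctor (ModuleCat k) (ComplexShape.down ℕ) i).obj
    ((AlgebraicTopology.alternatingFaceMapComplex (ModuleCat k)).obj (barChains k G))

/-- The congruence subgroup `Γ_n(𝔭)`: the kernel of the reduction map
`GL_n(O_K) → GL_n(O_K/𝔭)`. -/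
def congruenceSubgroup (K : Type) [Field K] [NumberField K]
    (𝔭 : Ideal (NumberField.RingOfIntegers K)) (n : ℕ) :
    Subgroup (GL (Fin n) (NumberField.RingOfIntegers K)) :=
  (Matrix.GeneralLinearGroup.map (Ideal.Quotient.mk 𝔭)).ker

/-!
Let `X n` be the bar complex of `Γ_n(𝔭)`. For a finite set `A` of coordinates one has the homology
of `X n` relative to the subcomplexes of those matrices that fix, for some `a ∈ A`, the `a`-th basis
vector and covector. The cosets of these stabilisers form a complex on which `Γ_n(𝔭)` acts, the
cliques of orthogonal dual pairs congruent to standard ones. It is highly acyclic, by induction over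
links, because over a Dedekind domain any few dual pairs with distinct indices have a common
neighbour of each remaining index. Hence the relative homology in a fixed degree vanishes as soon as
`A` is large.

Let `D a n` be the length of the `j`-th homology of `X n` relative to `a` of the `n` coordinates.
The matrices fixing a further coordinate form a copy of `Γ_{n-1}(𝔭)`, which gives a long exact
sequence. It splits into short exact ones for large `n`: a relative cycle avoiding one coordinate is
moved to another one by a transposition, which does not affect the chains avoiding both. So
`D a (n + 1) = D a n + D (a + 1) (n + 1)`, and as `D a` vanishes for large `a`, descending induction
on `a` shows that `D 0 n` is eventually polynomial in `n`, or eventually infinite.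

In the infinite case over a field, the value of `finrank` is `0`, again a polynomial.
-/

namespace CongruenceHomology

section Boundary

variable (k : Type*) [CommRing k] {V : Type*}

/-- The alternating sum of the faces of an ordered simplex, given as a list of vertices. The empty
list is the simplex of dimension `-1`, so all complexes below are augmented. -/
noncomputable def simplexBoundary : List V → (List V →₀ k)
  | [] => 0
  | x :: l => Finsupp.single l 1 - Finsupp.lmapDomain k k (List.cons x) (simplexBoundary l)

/-- The boundary operator on ordered chains, the linear extension of `simplexBoundary`. -/
noncomputable def boundary : (List V →₀ k) →ₗ[k] (List V →₀ k) :=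
  Finsupp.linearCombination k (simplexBoundary k)

/-- The cone operator, prepending the vertex `x` to every simplex. -/
noncomputable def cone (x : V) : (List V →₀ k) →ₗ[k] (List V →₀ k) :=
  Finsupp.lmapDomain k k (List.cons x)

@[simp] lemma boundary_single (l : List V) (a : k) :
    boundary k (Finsupp.single l a) = a • simplexBoundary k l := by
  simp [boundary]

@[simp] lemma cone_single (x : V) (l : List V) (a : k) :
    cone k x (Finsupp.single l a) = Finsupp.single (x :: l) a := by
  simp [cone]

lemma simplexBoundary_nil : simplexBoundary k ([] : List V) = 0 := rfl

lemma simplexBoundary_cons (x : V) (l : List V) :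
    simplexBoundary k (x :: l) = Finsupp.single l 1 - cone k x (simplexBoundary k l) := rfl

lemma boundary_cone (x : V) (z : List V →₀ k) :
    boundary k (cone k x z) = z - cone k x (boundary k z) := by
  induction z using Finsupp.induction_linear with
  | zero => simp
  | add f g hf hg => simp only [map_add, hf, hg]; abel
  | single l a => simp [simplexBoundary_cons, smul_sub]

lemma boundary_simplexBoundary (l : List V) : boundary k (simplexBoundary k l) = 0 := by
  induction l with
  | nil => simp [simplexBoundary_nil]
  | cons x l ih => simp [simplexBoundary_cons, boundary_cone, ih]

lemma boundary_boundary (z : List V →₀ k) : boundary k (boundary k z) = 0 := by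
  induction z using Finsupp.induction_linear with
  | zero => simp
  | add f g hf hg => simp only [map_add, hf, hg, add_zero]
  | single l a => simp [boundary_simplexBoundary]

lemma map_mem_of_mem_supported {X M : Type*} [AddCommGroup M] [Module k M] {s : Set X}
    {f : (X →₀ k) →ₗ[k] M} {T : Submodule k M} (h : ∀ x ∈ s, f (Finsupp.single x 1) ∈ T)
    {z : X →₀ k} (hz : z ∈ Finsupp.supported k k s) : f z ∈ T := by
  have hle : Finsupp.supported k k s ≤ T.comap f := by
    rw [Finsupp.supported_eq_span_single, Submodule.span_le]
    rintro _ ⟨x, hx, rfl⟩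
    exact h x hx
  exact hle hz

lemma map_eq_zero_of_mem_supported {X M : Type*} [AddCommGroup M] [Module k M] {s : Set X}
    {f : (X →₀ k) →ₗ[k] M} (h : ∀ x ∈ s, f (Finsupp.single x 1) = 0)
    {z : X →₀ k} (hz : z ∈ Finsupp.supported k k s) : f z = 0 :=
  (Submodule.mem_bot k).1 (map_mem_of_mem_supported k (fun x hx => by simp [h x hx]) hz)

/-- The ordered chains on the simplices with `p` vertices satisfying `K`; the degree is the number
of vertices, one more than the dimension. -/
def chains (K : List V → Prop) (p : ℕ) : Submodule k (List V →₀ k) :=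
  Finsupp.supported k k {l | K l ∧ l.length = p}

variable {k}

lemma single_mem_chains {K : List V → Prop} {l : List V} (h : K l) (a : k) :
    Finsupp.single l a ∈ chains k K l.length :=
  Finsupp.single_mem_supported k a ⟨h, rfl⟩

variable (k)

/-- `K` contains every face of each of its simplices. -/
def IsFaceClosed (K : List V → Prop) : Prop := ∀ ⦃l l'⦄, l'.Sublist l → K l → K l'

lemma simplexBoundary_mem_supported (l : List V) :
    simplexBoundary k l ∈
      Finsupp.supported k k {l' | l'.Sublist l ∧ l'.length + 1 = l.length} := by
  induction l with
  | nil => simp [simplexBoundary_nil]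
  | cons x l ih =>
    refine Submodule.sub_mem _ (Finsupp.single_mem_supported k _ (by simp)) ?_
    refine map_mem_of_mem_supported k (f := cone k x) ?_ ih
    rintro l' ⟨hsub, hlen⟩
    rw [cone_single]
    exact Finsupp.single_mem_supported k _ ⟨hsub.cons_cons x, by simpa using hlen⟩

variable {k}

lemma boundary_mem_chains {K : List V → Prop} (hK : IsFaceClosed K) {p : ℕ} {z : List V →₀ k}
    (hz : z ∈ chains k K (p + 1)) : boundary k z ∈ chains k K p := by
  refine map_mem_of_mem_supported k ?_ hz
  rintro l ⟨hl, hlen⟩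
  rw [boundary_single, one_smul]
  refine Finsupp.supported_mono ?_ (simplexBoundary_mem_supported k l)
  rintro l' ⟨hsub, hlen'⟩
  exact ⟨hK hsub hl, by omega⟩

lemma boundary_eq_zero_of_mem_chains_zero {K : List V → Prop} {z : List V →₀ k}
    (hz : z ∈ chains k K 0) : boundary k z = 0 := by
  refine map_eq_zero_of_mem_supported k ?_ hz
  rintro l ⟨-, hlen⟩
  simp [List.length_eq_zero_iff.1 hlen, simplexBoundary_nil]

lemma mem_chains_of_mem_supported {K K' : List V → Prop} {p : ℕ} {z : List V →₀ k}
    (hz : z ∈ chains k K' p) (hK : z ∈ Finsupp.supported k k {l | K l}) : z ∈ chains k K p :=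
  fun _ hl => ⟨hK hl, (hz hl).2⟩

lemma mem_supported_of_mem_chains {K : List V → Prop} {p : ℕ} {z : List V →₀ k}
    (hz : z ∈ chains k K p) : z ∈ Finsupp.supported k k {l | K l} :=
  fun _ hl => (hz hl).1

variable (k)

/-- The augmented complex of ordered chains on `K` is exact at all simplices with fewer than `c`
vertices, i.e. `K` is homologically `(c - 2)`-connected. -/
def IsAcyclicBelow (K : List V → Prop) (c : ℕ) : Prop :=
  ∀ p < c, ∀ z ∈ chains k K p, boundary k z = 0 → ∃ y ∈ chains k K (p + 1), boundary k y = z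

lemma isAcyclicBelow_of_le {K : List V → Prop} {c n : ℕ} (h : c ≤ n) :
    IsAcyclicBelow k K (c - n) :=
  fun _ hp => by omega

lemma IsAcyclicBelow.congr {K K' : List V → Prop} {c : ℕ} (hA : IsAcyclicBelow k K c)
    (h : ∀ l, K l ↔ K' l) : IsAcyclicBelow k K' c :=
  (funext fun l => propext (h l) : K = K') ▸ hA

lemma isAcyclicBelow_of_cone {K : List V → Prop} (x : V) (h : ∀ l, K l → K (x :: l)) (c : ℕ) :
    IsAcyclicBelow k K c := by
  intro p _ z hz hdz
  refine ⟨cone k x z, map_mem_of_mem_supported k ?_ hz, by simp [boundary_cone, hdz]⟩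
  rintro l ⟨hl, rfl⟩
  rw [cone_single]
  exact single_mem_chains (h l hl) 1

end Boundary

section Bicomplex

variable {k : Type*} [CommRing k]

-- The zigzag through the staircase `C p q, C (p - 1) (q + 1), …` ends in the zero column.
lemma exists_apply_apply_eq_of_exact {M : Type*} [AddCommGroup M] [Module k M]
    {C : ℕ → ℕ → Submodule k M} {d d' : M →ₗ[k] M} {c : ℕ}
    (hdd : ∀ z, d (d z) = 0) (hdd' : ∀ z, d' (d' z) = 0) (hcomm : ∀ z, d (d' z) = d' (d z))
    (hd : ∀ {p q z}, z ∈ C (p + 1) q → d z ∈ C p q) (hd0 : ∀ {q z}, z ∈ C 0 q → d z = 0)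
    (hd' : ∀ {p q z}, z ∈ C p (q + 1) → d' z ∈ C p q)
    (hrow : ∀ {p q z}, p + q < c → z ∈ C p q → d' z = 0 → ∃ y ∈ C p (q + 1), d' y = z)
    (hcol : ∀ {p q z}, p + q < c → z ∈ C p (q + 1) → d z = 0 → ∃ y ∈ C (p + 1) (q + 1), d y = z)
    {p q : ℕ} {z : M} (hpq : p + q < c) (hz : z ∈ C p q) (hdz : d z = 0) (hdz' : d' z = 0) :
    ∃ u ∈ C (p + 1) (q + 1), d' (d u) = z := by
  induction p generalizing q z with
  | zero =>
    obtain ⟨y, hy, rfl⟩ := hrow hpq hz hdz'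
    obtain ⟨u, hu, rfl⟩ := hcol hpq hy (hd0 hy)
    exact ⟨u, hu, rfl⟩
  | succ p ih =>
    obtain ⟨y, hy, rfl⟩ := hrow hpq hz hdz'
    obtain ⟨u', hu', hdu'⟩ := ih (by omega) (hd hy) (hdd y) (by rw [← hcomm, hdz])
    obtain ⟨u, hu, hdu⟩ := hcol hpq (Submodule.sub_mem _ hy (hd' hu'))
      (by rw [map_sub, hcomm, hdu', sub_self])
    exact ⟨u, hu, by rw [hdu, map_sub, hdd', sub_zero]⟩

variable {X Y A B : Type*}

/-- The operator `f ⊗ id` on `(X →₀ k) ⊗ (B →₀ k) = (X × B →₀ k)`. -/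
noncomputable def mapFst (B : Type*) (f : (X →₀ k) →ₗ[k] (Y →₀ k)) :
    (X × B →₀ k) →ₗ[k] (Y × B →₀ k) :=
  finsuppTensorFinsupp' k Y B ∘ₗ f.rTensor (B →₀ k) ∘ₗ (finsuppTensorFinsupp' k X B).symm

/-- The operator `id ⊗ f` on `(A →₀ k) ⊗ (X →₀ k) = (A × X →₀ k)`. -/
noncomputable def mapSnd (A : Type*) (f : (X →₀ k) →ₗ[k] (Y →₀ k)) :
    (A × X →₀ k) →ₗ[k] (A × Y →₀ k) :=
  finsuppTensorFinsupp' k A Y ∘ₗ f.lTensor (A →₀ k) ∘ₗ (finsuppTensorFinsupp' k A X).symm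

lemma mapFst_mapSnd (f : (X →₀ k) →ₗ[k] (Y →₀ k)) (g : (A →₀ k) →ₗ[k] (B →₀ k))
    (z : X × A →₀ k) : mapFst B f (mapSnd X g z) = mapSnd Y g (mapFst A f z) := by
  simp only [mapFst, mapSnd, LinearMap.comp_apply, LinearEquiv.coe_coe,
    LinearEquiv.symm_apply_apply]
  rw [← LinearMap.comp_apply, ← LinearMap.comp_apply, LinearMap.rTensor_comp_lTensor,
    LinearMap.lTensor_comp_rTensor]

lemma curry_zero_apply (a : A) : (0 : A × X →₀ k).curry a = 0 := by
  ext; rfl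

lemma curry_add_apply (z w : A × X →₀ k) (a : A) : (z + w).curry a = z.curry a + w.curry a := by
  ext; rfl

lemma curry_mapSnd (f : (X →₀ k) →ₗ[k] (Y →₀ k)) (z : A × X →₀ k) (a : A) :
    (mapSnd A f z).curry a = f (z.curry a) := by
  classical
  induction z using Finsupp.induction_linear with
  | zero => simp only [map_zero, curry_zero_apply]
  | add z w hz hw => simp only [map_add, curry_add_apply, hz, hw]
  | single i r =>
    ext y
    rw [mapSnd, LinearMap.comp_apply, LinearMap.comp_apply, LinearEquiv.coe_coe,
      LinearEquiv.coe_coe, finsuppTensorFinsupp'_symm_single_eq_single_one_tmul,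
      LinearMap.lTensor_tmul, Finsupp.curry_apply, finsuppTensorFinsupp'_apply_apply,
      Finsupp.curry_single]
    by_cases h : i.1 = a <;> simp [h]

lemma swap_swap (z : A × B →₀ k) : (z.mapDomain Prod.swap).mapDomain Prod.swap = z := by
  rw [← Finsupp.mapDomain_comp, Prod.swap_swap_eq, Finsupp.mapDomain_id]

lemma mapFst_eq_swap_mapSnd (f : (X →₀ k) →ₗ[k] (Y →₀ k)) (z : X × B →₀ k) :
    mapFst B f z = (mapSnd B f (z.mapDomain Prod.swap)).mapDomain Prod.swap := by
  induction z using Finsupp.induction_linear with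
  | zero => simp
  | add z w hz hw => simp only [Finsupp.mapDomain_add, map_add, hz, hw]
  | single i r =>
    ext ⟨y, b⟩
    have hswap (w : B × Y →₀ k) : w.mapDomain Prod.swap (y, b) = w (b, y) :=
      Finsupp.mapDomain_apply Prod.swap_injective w (b, y)
    rw [hswap, Finsupp.mapDomain_single]
    simp only [mapFst, mapSnd, LinearMap.comp_apply, LinearEquiv.coe_coe]
    rw [finsuppTensorFinsupp'_symm_single_eq_single_one_tmul,
      finsuppTensorFinsupp'_symm_single_eq_tmul_single_one, LinearMap.lTensor_tmul,
      LinearMap.rTensor_tmul, finsuppTensorFinsupp'_apply_apply,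
      finsuppTensorFinsupp'_apply_apply, mul_comm]
    rfl

lemma mapSnd_mapSnd_eq_zero {Z : Type*} {f : (X →₀ k) →ₗ[k] (Y →₀ k)}
    {g : (Y →₀ k) →ₗ[k] (Z →₀ k)} (h : ∀ z, g (f z) = 0) (z : A × X →₀ k) :
    mapSnd A g (mapSnd A f z) = 0 := by
  ext ⟨a, y⟩
  rw [← Finsupp.curry_apply, curry_mapSnd, curry_mapSnd, h]
  rfl

lemma mem_supported_iff_curry {D : A → X → Prop} {z : A × X →₀ k} :
    z ∈ Finsupp.supported k k {i | D i.1 i.2} ↔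
      ∀ a, z.curry a ∈ Finsupp.supported k k {x | D a x} := by
  simp [Finsupp.mem_supported', Finsupp.curry_apply]

lemma mapSnd_mem_supported {f : (X →₀ k) →ₗ[k] (Y →₀ k)} {D : A → X → Prop} {E : A → Y → Prop}
    (h : ∀ a, ∀ z ∈ Finsupp.supported k k {x | D a x}, f z ∈ Finsupp.supported k k {y | E a y})
    {z : A × X →₀ k} (hz : z ∈ Finsupp.supported k k {i | D i.1 i.2}) :
    mapSnd A f z ∈ Finsupp.supported k k {i | E i.1 i.2} := by
  refine mem_supported_iff_curry.2 fun a => ?_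
  rw [curry_mapSnd]
  exact h a _ (mem_supported_iff_curry.1 hz a)

lemma mapSnd_eq_zero {f : (X →₀ k) →ₗ[k] (Y →₀ k)} {D : A → X → Prop}
    (h : ∀ a, ∀ z ∈ Finsupp.supported k k {x | D a x}, f z = 0)
    {z : A × X →₀ k} (hz : z ∈ Finsupp.supported k k {i | D i.1 i.2}) : mapSnd A f z = 0 := by
  ext ⟨a, y⟩
  rw [← Finsupp.curry_apply, curry_mapSnd, h a _ (mem_supported_iff_curry.1 hz a)]
  rfl

lemma exists_mapSnd_eq {Z : Type*} {f : (X →₀ k) →ₗ[k] (Y →₀ k)} {g : (Y →₀ k) →ₗ[k] (Z →₀ k)}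
    {D : A → Y → Prop} {E : A → X → Prop}
    (h : ∀ a, (∃ y, D a y) → ∀ z ∈ Finsupp.supported k k {y | D a y}, g z = 0 →
      ∃ y ∈ Finsupp.supported k k {x | E a x}, f y = z)
    {z : A × Y →₀ k} (hz : z ∈ Finsupp.supported k k {i | D i.1 i.2}) (hgz : mapSnd A g z = 0) :
    ∃ y ∈ Finsupp.supported k k {i | E i.1 i.2}, mapSnd A f y = z := by
  classical
  have hfibre (a : A) : ∃ y ∈ Finsupp.supported k k {x | E a x}, f y = z.curry a := by
    have hza := mem_supported_iff_curry.1 hz a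
    by_cases ha : ∃ y, D a y
    · exact h a ha _ hza (by rw [← curry_mapSnd, hgz, curry_zero_apply])
    · refine ⟨0, Submodule.zero_mem _, ?_⟩
      rw [map_zero, eq_comm, ← Finsupp.support_eq_empty, Finset.eq_empty_iff_forall_notMem]
      exact fun y hy => ha ⟨y, hza hy⟩
  choose y hyE hy using hfibre
  let w : A →₀ X →₀ k := Finsupp.onFinset z.curry.support
    (fun a => if a ∈ z.curry.support then y a else 0) fun _ h => by_contra fun ha => h (if_neg ha)
  have hw (a : A) : w.uncurry.curry a = if a ∈ z.curry.support then y a else 0 := by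
    rw [Finsupp.curry_uncurry]
    rfl
  refine ⟨w.uncurry, mem_supported_iff_curry.2 fun a => ?_, ?_⟩
  · rw [hw]
    split_ifs
    exacts [hyE a, Submodule.zero_mem _]
  · ext ⟨a, x⟩
    rw [← Finsupp.curry_apply, ← Finsupp.curry_apply, curry_mapSnd, hw]
    split_ifs with ha
    · rw [hy]
    · rw [map_zero, Finsupp.notMem_support_iff.1 ha]

lemma swap_mem_supported {D : A → X → Prop} {z : A × X →₀ k}
    (hz : z ∈ Finsupp.supported k k {i | D i.1 i.2}) :
    z.mapDomain Prod.swap ∈ Finsupp.supported k k {i | D i.2 i.1} := by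
  refine map_mem_of_mem_supported k (f := Finsupp.lmapDomain k k Prod.swap) (fun i hi => ?_) hz
  rw [Finsupp.lmapDomain_apply, Finsupp.mapDomain_single]
  exact Finsupp.single_mem_supported k _ hi

lemma mapFst_mem_supported {f : (X →₀ k) →ₗ[k] (Y →₀ k)} {D : X → B → Prop} {E : Y → B → Prop}
    (h : ∀ b, ∀ z ∈ Finsupp.supported k k {x | D x b}, f z ∈ Finsupp.supported k k {y | E y b})
    {z : X × B →₀ k} (hz : z ∈ Finsupp.supported k k {i | D i.1 i.2}) :
    mapFst B f z ∈ Finsupp.supported k k {i | E i.1 i.2} := by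
  rw [mapFst_eq_swap_mapSnd]
  exact swap_mem_supported (D := fun b y => E y b)
    (mapSnd_mem_supported (D := fun b x => D x b) h (swap_mem_supported hz))

lemma mapFst_eq_zero {f : (X →₀ k) →ₗ[k] (Y →₀ k)} {D : X → B → Prop}
    (h : ∀ b, ∀ z ∈ Finsupp.supported k k {x | D x b}, f z = 0)
    {z : X × B →₀ k} (hz : z ∈ Finsupp.supported k k {i | D i.1 i.2}) : mapFst B f z = 0 := by
  rw [mapFst_eq_swap_mapSnd, mapSnd_eq_zero (D := fun b x => D x b) h (swap_mem_supported hz),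
    Finsupp.mapDomain_zero]

lemma mapFst_mapFst_eq_zero {Z : Type*} {f : (X →₀ k) →ₗ[k] (Y →₀ k)}
    {g : (Y →₀ k) →ₗ[k] (Z →₀ k)} (h : ∀ z, g (f z) = 0) (z : X × B →₀ k) :
    mapFst B g (mapFst B f z) = 0 := by
  rw [mapFst_eq_swap_mapSnd, mapFst_eq_swap_mapSnd, swap_swap, mapSnd_mapSnd_eq_zero h,
    Finsupp.mapDomain_zero]

lemma exists_mapFst_eq {Z : Type*} {f : (X →₀ k) →ₗ[k] (Y →₀ k)} {g : (Y →₀ k) →ₗ[k] (Z →₀ k)}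
    {D : Y → B → Prop} {E : X → B → Prop}
    (h : ∀ b, (∃ y, D y b) → ∀ z ∈ Finsupp.supported k k {y | D y b}, g z = 0 →
      ∃ y ∈ Finsupp.supported k k {x | E x b}, f y = z)
    {z : Y × B →₀ k} (hz : z ∈ Finsupp.supported k k {i | D i.1 i.2}) (hgz : mapFst B g z = 0) :
    ∃ y ∈ Finsupp.supported k k {i | E i.1 i.2}, mapFst B f y = z := by
  rw [mapFst_eq_swap_mapSnd] at hgz
  obtain ⟨y, hy, hyz⟩ := exists_mapSnd_eq (D := fun b x => D x b) (E := fun b x => E x b) h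
    (swap_mem_supported hz) (by rw [← swap_swap (mapSnd B g _), hgz, Finsupp.mapDomain_zero])
  refine ⟨_, swap_mem_supported (D := fun b x => E x b) hy, ?_⟩
  rw [mapFst_eq_swap_mapSnd, swap_swap, hyz, swap_swap]

variable {V W : Type*} {D : List V → List W → Prop} {c : ℕ}

variable (k) in
/-- The chains of bidegree `(p, q)` on the pairs of simplices related by `D`. -/
def bichains (D : List V → List W → Prop) (p q : ℕ) : Submodule k (List V × List W →₀ k) :=
  Finsupp.supported k k {i | (D i.1 i.2 ∧ i.2.length = q) ∧ i.1.length = p}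

lemma bichains_eq (p q : ℕ) : bichains k D p q =
    Finsupp.supported k k {i | (D i.1 i.2 ∧ i.1.length = p) ∧ i.2.length = q} := by
  simp only [bichains, and_right_comm]

/-- `D` is inherited by faces in both variables. -/
def IsFaceClosed₂ (D : List V → List W → Prop) : Prop :=
  ∀ ⦃s t s' t'⦄, s'.Sublist s → t'.Sublist t → D s t → D s' t'

lemma mapFst_boundary_mem (hD : IsFaceClosed₂ D) {p q : ℕ} {z : List V × List W →₀ k}
    (hz : z ∈ bichains k D (p + 1) q) : mapFst _ (boundary k) z ∈ bichains k D p q :=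
  mapFst_mem_supported (D := fun s t => (D s t ∧ t.length = q) ∧ s.length = p + 1)
    (E := fun s t => (D s t ∧ t.length = q) ∧ s.length = p)
    (fun t _ => boundary_mem_chains fun _ _ hs h => ⟨hD hs (List.Sublist.refl t) h.1, h.2⟩) hz

lemma mapSnd_boundary_mem (hD : IsFaceClosed₂ D) {p q : ℕ} {z : List V × List W →₀ k}
    (hz : z ∈ bichains k D p (q + 1)) : mapSnd _ (boundary k) z ∈ bichains k D p q := by
  rw [bichains_eq] at hz ⊢
  exact mapSnd_mem_supported (D := fun s t => (D s t ∧ s.length = p) ∧ t.length = q + 1)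
    (E := fun s t => (D s t ∧ s.length = p) ∧ t.length = q)
    (fun s _ => boundary_mem_chains fun _ _ ht h => ⟨hD (List.Sublist.refl s) ht h.1, h.2⟩) hz

lemma mapFst_boundary_eq_zero {q : ℕ} {z : List V × List W →₀ k} (hz : z ∈ bichains k D 0 q) :
    mapFst _ (boundary k) z = 0 :=
  mapFst_eq_zero (D := fun s t => (D s t ∧ t.length = q) ∧ s.length = 0)
    (fun _ _ => boundary_eq_zero_of_mem_chains_zero) hz

lemma mapSnd_boundary_eq_zero {p : ℕ} {z : List V × List W →₀ k} (hz : z ∈ bichains k D p 0) :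
    mapSnd _ (boundary k) z = 0 := by
  rw [bichains_eq] at hz
  exact mapSnd_eq_zero (D := fun s t => (D s t ∧ s.length = p) ∧ t.length = 0)
    (fun _ _ => boundary_eq_zero_of_mem_chains_zero) hz

lemma exists_mapFst_boundary_eq (hD : IsFaceClosed₂ D)
    (hcol : ∀ t, D [] t → IsAcyclicBelow k (fun s => D s t) (c - t.length))
    {p q : ℕ} (hpq : q + p < c) {z : List V × List W →₀ k} (hz : z ∈ bichains k D p q)
    (hdz : mapFst _ (boundary k) z = 0) :
    ∃ y ∈ bichains k D (p + 1) q, mapFst _ (boundary k) y = z := by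
  refine exists_mapFst_eq (D := fun s t => (D s t ∧ t.length = q) ∧ s.length = p)
    (E := fun s t => (D s t ∧ t.length = q) ∧ s.length = p + 1) ?_ hz hdz
  rintro t ⟨s, ⟨hst, rfl⟩, -⟩
  simpa only [chains, and_true] using
    hcol t (hD s.nil_sublist (List.Sublist.refl t) hst) p (by omega)

lemma exists_mapSnd_boundary_eq (hD : IsFaceClosed₂ D)
    (hrow : ∀ s, D s [] → s ≠ [] → IsAcyclicBelow k (D s) (c + 1 - s.length))
    {p q : ℕ} (hpq : q + p < c) {z : List V × List W →₀ k} (hz : z ∈ bichains k D (p + 1) q)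
    (hdz : mapSnd _ (boundary k) z = 0) :
    ∃ y ∈ bichains k D (p + 1) (q + 1), mapSnd _ (boundary k) y = z := by
  rw [bichains_eq] at hz ⊢
  refine exists_mapSnd_eq (D := fun s t => (D s t ∧ s.length = p + 1) ∧ t.length = q)
    (E := fun s t => (D s t ∧ s.length = p + 1) ∧ t.length = q + 1) ?_ hz hdz
  rintro s ⟨t, ⟨hst, hlen⟩, -⟩
  simpa only [chains, hlen, and_true] using hrow s (hD (List.Sublist.refl s) t.nil_sublist hst)
    (List.ne_nil_of_length_eq_add_one hlen) q (by omega)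

-- A cycle of `D []` is a cycle of the double complex in column `0`, so it is `∂' (∂ u)`, where
-- `∂ u` lies in column `0` again.
theorem IsAcyclicBelow.of_bicomplex (hD : IsFaceClosed₂ D)
    (hcol : ∀ t, D [] t → IsAcyclicBelow k (fun s => D s t) (c - t.length))
    (hrow : ∀ s, D s [] → s ≠ [] → IsAcyclicBelow k (D s) (c + 1 - s.length)) :
    IsAcyclicBelow k (D []) c := by
  classical
  intro q hq z hz hdz
  let w : List V × List W →₀ k := (Finsupp.single [] z).uncurry
  have hw : w ∈ bichains k D 0 q := by
    rw [bichains_eq]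
    refine mem_supported_iff_curry (D := fun s t => (D s t ∧ s.length = 0) ∧ t.length = q).2
      fun s => ?_
    rw [Finsupp.curry_uncurry, Finsupp.single_apply]
    split_ifs with hs
    · simpa [chains, ← hs] using hz
    · exact Submodule.zero_mem _
  have hdw : mapSnd _ (boundary k) w = 0 := by
    ext ⟨s, t⟩
    rw [← Finsupp.curry_apply, curry_mapSnd, Finsupp.curry_uncurry]
    by_cases hs : s = [] <;> simp [hs, hdz]
  obtain ⟨u, hu, huw⟩ := exists_apply_apply_eq_of_exact (C := fun q p => bichains k D p q)
    (mapSnd_mapSnd_eq_zero (boundary_boundary k)) (mapFst_mapFst_eq_zero (boundary_boundary k))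
    (fun z => (mapFst_mapSnd _ _ z).symm) (mapSnd_boundary_mem hD) mapSnd_boundary_eq_zero
    (mapFst_boundary_mem hD) (fun h => exists_mapFst_boundary_eq hD hcol h)
    (fun h => exists_mapSnd_boundary_eq hD hrow h) hq hw hdw (mapFst_boundary_eq_zero hw)
  have hdu := mapFst_boundary_mem hD hu
  rw [bichains_eq] at hdu
  refine ⟨(mapFst _ (boundary k) u).curry [], ?_, ?_⟩
  · simpa [chains] using mem_supported_iff_curry
      (D := fun s t => (D s t ∧ s.length = 0) ∧ t.length = q + 1).1 hdu []
  · rw [← curry_mapSnd, ← mapFst_mapSnd, huw, Finsupp.curry_uncurry, Finsupp.single_eq_same]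

end Bicomplex

section ColoredGraph

variable (k : Type*) [CommRing k] {V S : Type*}

lemma exists_forall_mem_color_ne {col : V → S} {m : ℕ} {y : Fin m → V}
    (hy : Function.Injective (col ∘ y)) {l : List V} (hl : l.length < m) :
    ∃ i, ∀ v ∈ l, col v ≠ col (y i) := by
  classical
  by_contra! hc
  have hsub : Finset.univ.image (col ∘ y) ⊆ (l.map col).toFinset := by
    simpa [Finset.subset_iff, eq_comm] using hc
  have hcard := (Finset.card_le_card hsub).trans (List.toFinset_card_le _)
  rw [Finset.card_image_of_injective _ hy, Finset.card_fin, List.length_map] at hcard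
  omega

lemma injOn_color_cons {col : V → S} {x : V} {l : List V} (hl : Set.InjOn col {v | v ∈ l})
    (hx : ∀ v ∈ l, col v = col x → v = x) : Set.InjOn col {v | v ∈ x :: l} := by
  simp only [Set.InjOn, Set.mem_ofPred_eq, List.mem_cons] at hl ⊢
  grind

lemma isAcyclicBelow_injOn_color (col : V → S) (U : V → Prop) {c m : ℕ} (hcm : c ≤ m)
    (y : Fin m → V) (hyU : ∀ i, U (y i)) (hy : Function.Injective (col ∘ y)) :
    IsAcyclicBelow k (fun l => (∀ x ∈ l, U x) ∧ Set.InjOn col {x | x ∈ l}) c := by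
  let D (t : List (Fin m)) (l : List V) : Prop :=
    ((∀ x ∈ l, U x) ∧ Set.InjOn col {x | x ∈ l}) ∧ ∀ i ∈ t, ∀ v ∈ l, col v = col (y i) → v = y i
  have hD : IsFaceClosed₂ D := fun _ _ _ _ ht hl h =>
    ⟨⟨fun x hx => h.1.1 x (hl.subset hx), h.1.2.mono hl.subset⟩,
      fun i hi v hv => h.2 i (ht.subset hi) v (hl.subset hv)⟩
  refine (IsAcyclicBelow.of_bicomplex hD ?_ ?_).congr k (K := D []) fun l => by simp [D]
  · rintro l -
    rcases le_or_gt c l.length with hl | hl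
    · exact isAcyclicBelow_of_le k hl
    obtain ⟨i, hi⟩ := exists_forall_mem_color_ne hy (hl.trans_le hcm)
    refine isAcyclicBelow_of_cone k i (fun t ht => ⟨ht.1, ?_⟩) _
    exact List.forall_mem_cons.2 ⟨fun v hv h => absurd h (hi v hv), ht.2⟩
  · rintro t - ht
    obtain ⟨i, t, rfl⟩ := List.exists_cons_of_ne_nil ht
    refine isAcyclicBelow_of_cone k (y i) (fun l hl => ⟨⟨?_, ?_⟩, fun j hj => ?_⟩) _
    · exact List.forall_mem_cons.2 ⟨hyU i, hl.1.1⟩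
    · exact injOn_color_cons hl.1.2 (hl.2 i List.mem_cons_self)
    · exact List.forall_mem_cons.2 ⟨fun h => congrArg y (hy h), hl.2 j hj⟩

/-- `adj` is a reflexive symmetric relation, i.e. a graph with a loop at each vertex, and `col`
gives different colours to adjacent vertices. -/
structure IsColoredGraph (adj : V → V → Prop) (col : V → S) : Prop where
  refl : ∀ x, adj x x
  symm : ∀ {x y}, adj x y → adj y x
  eq_of_color_eq : ∀ {x y}, adj x y → col x = col y → x = y

/-- The simplices of the clique complex of the graph `adj`. -/
def IsClique (adj : V → V → Prop) (l : List V) : Prop := ∀ x ∈ l, ∀ y ∈ l, adj x y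

/-- Every vertex of `l` is adjacent to every vertex of `F`. -/
def IsJoined (adj : V → V → Prop) (l F : List V) : Prop := ∀ x ∈ l, ∀ y ∈ F, adj x y

variable {adj : V → V → Prop} {col : V → S} {F l t : List V} {x : V}

lemma IsJoined.mono {l' F' : List V} (h : IsJoined adj l F) (hl : l'.Sublist l)
    (hF : F'.Sublist F) : IsJoined adj l' F' :=
  fun x hx y hy => h x (hl.subset hx) y (hF.subset hy)

lemma IsClique.mono {l' : List V} (h : IsClique adj l) (hl : l'.Sublist l) : IsClique adj l' :=
  IsJoined.mono h hl hl

@[simp] lemma isJoined_nil_left : IsJoined adj [] F := by simp [IsJoined]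

@[simp] lemma isJoined_nil_right : IsJoined adj l [] := by simp [IsJoined]

lemma isJoined_cons_left : IsJoined adj (x :: l) F ↔ (∀ y ∈ F, adj x y) ∧ IsJoined adj l F := by
  simp [IsJoined]

lemma isJoined_append_right : IsJoined adj l (F ++ t) ↔ IsJoined adj l F ∧ IsJoined adj l t := by
  simp [IsJoined, or_imp, forall_and]

namespace IsColoredGraph

variable (h : IsColoredGraph adj col)
include h

lemma isJoined_comm : IsJoined adj l F ↔ IsJoined adj F l :=
  ⟨fun hl y hy x hx => h.symm (hl x hx y hy), fun hF x hx y hy => h.symm (hF y hy x hx)⟩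

lemma isClique_cons (hl : IsClique adj l) (hx : ∀ y ∈ l, adj x y) : IsClique adj (x :: l) := by
  have hrefl := h.refl x
  have hsymm := fun y hy => h.symm (hx y hy)
  simp only [IsClique, List.mem_cons] at hl ⊢
  grind

lemma injOn_append (hF : Set.InjOn col {x | x ∈ F}) (hl : Set.InjOn col {x | x ∈ l})
    (hlF : IsJoined adj l F) : Set.InjOn col {x | x ∈ F ++ l} := by
  have hne : ∀ x ∈ l, ∀ y ∈ F, col x = col y → x = y := fun x hx y hy =>
    h.eq_of_color_eq (hlF x hx y hy)
  simp only [Set.InjOn, Set.mem_ofPred_eq, List.mem_append] at hF hl ⊢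
  grind

lemma injOn_of_isClique (hl : IsClique adj l) : Set.InjOn col {x | x ∈ l} :=
  fun x hx y hy hxy => h.eq_of_color_eq (hl x hx y hy) hxy

end IsColoredGraph

section Link

variable {Q : ℕ}
  (hQ : ∀ F : List V, Set.InjOn col {x | x ∈ F} → F.length ≤ Q →
    ∃ y : Fin Q → V, Function.Injective (col ∘ y) ∧ ∀ i, ∀ x ∈ F, adj (y i) x)
include hQ

lemma isAcyclicBelow_injOn_color_joined (hF : Set.InjOn col {x | x ∈ F}) {c : ℕ}
    (hFc : F.length ≤ Q) (hc : c ≤ Q) :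
    IsAcyclicBelow k (fun l => IsJoined adj l F ∧ Set.InjOn col {x | x ∈ l}) c := by
  obtain ⟨y, hy, hyF⟩ := hQ F hF hFc
  exact isAcyclicBelow_injOn_color k col (fun x => ∀ z ∈ F, adj x z) hc y hyF hy

variable (h : IsColoredGraph adj col)
include h

-- Compare the clique complex of the link of `F` with the larger complex of all distinctly coloured
-- lists in the link, which is highly connected because it contains large joins of points.
theorem isAcyclicBelow_isClique_joined {c : ℕ} (hF : Set.InjOn col {x | x ∈ F})
    (hFc : F.length + 2 * c ≤ Q) :
    IsAcyclicBelow k (fun l => IsClique adj l ∧ IsJoined adj l F) c := by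
  induction c using Nat.strong_induction_on generalizing F with
  | _ c ih =>
  let D (t l : List V) : Prop := (IsClique adj l ∧ IsJoined adj l F) ∧
    (IsJoined adj t F ∧ Set.InjOn col {x | x ∈ t}) ∧ IsJoined adj l t
  have hD : IsFaceClosed₂ D := fun _ _ _ _ ht hl hD =>
    ⟨⟨hD.1.1.mono hl, hD.1.2.mono hl (List.Sublist.refl F)⟩,
      ⟨hD.2.1.1.mono ht (List.Sublist.refl F), hD.2.1.2.mono ht.subset⟩, hD.2.2.mono hl ht⟩
  refine (IsAcyclicBelow.of_bicomplex hD ?_ ?_).congr k (K := D []) fun l => by simp [D]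
  · rintro l ⟨hl, -⟩
    rcases le_or_gt c l.length with hlc | hlc
    · exact isAcyclicBelow_of_le k hlc
    refine (isAcyclicBelow_injOn_color_joined k hQ (F := F ++ l)
      (h.injOn_append hF (h.injOn_of_isClique hl.1) hl.2) (by simp; omega) (by omega)).congr k
      fun t => ?_
    simp only [D, hl, true_and, and_true, isJoined_append_right, h.isJoined_comm (l := l),
      and_right_comm]
  · rintro (_ | ⟨x, _ | ⟨y, t⟩⟩) ⟨-, ht, -⟩ hne
    · exact absurd rfl hne
    · refine isAcyclicBelow_of_cone k x (fun l hl => ⟨⟨?_, ?_⟩, hl.2.1, ?_⟩) _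
      · exact h.isClique_cons hl.1.1 fun y hy => h.symm (hl.2.2 y hy x List.mem_cons_self)
      · exact isJoined_cons_left.2 ⟨(isJoined_cons_left.1 ht.1).1, hl.1.2⟩
      · exact isJoined_cons_left.2 ⟨by simp [h.refl], hl.2.2⟩
    · rcases le_or_gt (c + 1) (x :: y :: t).length with htc | htc
      · exact isAcyclicBelow_of_le k htc
      have hlen : 2 ≤ (x :: y :: t).length := by simp
      generalize x :: y :: t = t at *
      refine (ih (c + 1 - t.length) (by omega) (F := F ++ t)
        (h.injOn_append hF ht.2 ht.1) (by simp; omega)).congr k fun l => ?_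
      simp only [D, ht, true_and, isJoined_append_right, and_assoc]

end Link

lemma isAcyclicBelow_exists_vertex_eq {Γ : Type*} (h : IsColoredGraph adj col) {vert : Γ → S → V}
    (hcol : ∀ g s, col (vert g s) = s) (hadj : ∀ g s s', adj (vert g s) (vert g s')) {c : ℕ}
    (hacyc : IsAcyclicBelow k (IsClique adj) c)
    (htrans : ∀ l : List V, IsClique adj l → l.length ≤ c → ∃ g, ∀ x ∈ l, vert g (col x) = x) :
    IsAcyclicBelow k (fun σ : List Γ => ∃ s, ∀ g ∈ σ, ∀ g' ∈ σ, vert g s = vert g' s) c := by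
  let D (l : List V) (σ : List Γ) : Prop :=
    (∃ s, ∀ g ∈ σ, ∀ g' ∈ σ, vert g s = vert g' s) ∧ IsClique adj l ∧
      ∀ g ∈ σ, ∀ x ∈ l, vert g (col x) = x
  have hD : IsFaceClosed₂ D := fun _ _ _ _ hl hσ ⟨⟨s, hs⟩, hcl, hv⟩ =>
    ⟨⟨s, fun g hg g' hg' => hs g (hσ.subset hg) g' (hσ.subset hg')⟩, hcl.mono hl,
      fun g hg x hx => hv g (hσ.subset hg) x (hl.subset hx)⟩
  refine (IsAcyclicBelow.of_bicomplex hD ?_ ?_).congr k (K := D []) fun σ => by simp [D, IsClique]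
  · rintro (_ | ⟨g, σ⟩) ⟨⟨s, hs⟩, -⟩
    · exact hacyc.congr k fun l => by simp [D, show ∃ _ : S, True from ⟨s, trivial⟩]
    · refine isAcyclicBelow_of_cone k (vert g s) (fun l hl => ⟨hl.1, ?_, fun g' hg' => ?_⟩) _
      · refine h.isClique_cons hl.2.1 fun x hx => ?_
        rw [← hl.2.2 g List.mem_cons_self x hx]
        exact hadj g s _
      · refine List.forall_mem_cons.2 ⟨?_, hl.2.2 g' hg'⟩
        rw [hcol, hs g' hg' g List.mem_cons_self]
  · rintro l ⟨-, hl, -⟩ hne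
    rcases le_or_gt (c + 1) l.length with hlc | hlc
    · exact isAcyclicBelow_of_le k hlc
    obtain ⟨g, hg⟩ := htrans l hl (by omega)
    obtain ⟨x, hx⟩ := List.exists_mem_of_ne_nil l hne
    refine isAcyclicBelow_of_cone k g (fun σ hσ => ?_) _
    have hσ' : ∀ g' ∈ g :: σ, ∀ x ∈ l, vert g' (col x) = x := List.forall_mem_cons.2 ⟨hg, hσ.2.2⟩
    exact ⟨⟨col x, fun a ha b hb => by rw [hσ' a ha x hx, hσ' b hb x hx]⟩, hl, hσ'⟩

end ColoredGraph

section MapChains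

variable (k : Type*) [CommRing k] {V W X : Type*}

/-- The map on ordered chains induced by a map of vertices. -/
noncomputable def mapChains (f : V → W) : (List V →₀ k) →ₗ[k] (List W →₀ k) :=
  Finsupp.lmapDomain k k (List.map f)

variable {k}

@[simp] lemma mapChains_single (f : V → W) (l : List V) (a : k) :
    mapChains k f (Finsupp.single l a) = Finsupp.single (l.map f) a := by
  simp [mapChains]

lemma mapChains_mapChains (g : W → X) (f : V → W) (z : List V →₀ k) :
    mapChains k g (mapChains k f z) = mapChains k (g ∘ f) z := by
  simp [mapChains, ← Finsupp.mapDomain_comp, Function.comp_def]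

lemma mapChains_id (z : List V →₀ k) : mapChains k id z = z := by
  simp [mapChains]

lemma mapChains_injective {f : V → W} (hf : Function.Injective f) :
    Function.Injective (mapChains k f) :=
  Finsupp.mapDomain_injective (List.map_injective_iff.2 hf)

lemma mapChains_cone (f : V → W) (x : V) (z : List V →₀ k) :
    mapChains k f (cone k x z) = cone k (f x) (mapChains k f z) := by
  simp [mapChains, cone, ← Finsupp.mapDomain_comp, Function.comp_def]

lemma mapChains_simplexBoundary (f : V → W) (l : List V) :
    mapChains k f (simplexBoundary k l) = simplexBoundary k (l.map f) := by
  induction l with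
  | nil => simp [simplexBoundary_nil]
  | cons x l ih => simp [simplexBoundary_cons, mapChains_cone, ih]

lemma boundary_mapChains (f : V → W) (z : List V →₀ k) :
    boundary k (mapChains k f z) = mapChains k f (boundary k z) := by
  induction z using Finsupp.induction_linear with
  | zero => simp
  | add z w hz hw => simp only [map_add, hz, hw]
  | single l a => simp [mapChains_simplexBoundary]

lemma mapChains_mem_chains {f : V → W} {K : List V → Prop} {K' : List W → Prop}
    (h : ∀ l, K l → K' (l.map f)) {p : ℕ} {z : List V →₀ k} (hz : z ∈ chains k K p) :
    mapChains k f z ∈ chains k K' p := by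
  refine map_mem_of_mem_supported k ?_ hz
  rintro l ⟨hl, rfl⟩
  simpa using single_mem_chains (h l hl) (1 : k)

end MapChains

section OrderedChains

variable {k : Type*} [CommRing k] {Γ : Type*}

variable (k Γ) in
/-- All ordered chains on `Γ` with `p` vertices; in homogeneous coordinates, the bar complex in
degree `p`. -/
abbrev orderedChains (p : ℕ) : Submodule k (List Γ →₀ k) := chains k (fun _ => True) p

lemma boundary_mem_orderedChains {p : ℕ} {z : List Γ →₀ k} (hz : z ∈ orderedChains k Γ (p + 1)) :
    boundary k z ∈ orderedChains k Γ p :=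
  boundary_mem_chains (fun _ _ _ _ => trivial) hz

lemma simplexBoundary_mem_orderedChains {l : List Γ} {p : ℕ} (hl : l.length = p + 1) :
    simplexBoundary k l ∈ orderedChains k Γ p := by
  have h : Finsupp.single l (1 : k) ∈ orderedChains k Γ (p + 1) :=
    Finsupp.single_mem_supported k _ ⟨trivial, hl⟩
  simpa using boundary_mem_orderedChains h

lemma cone_mem_orderedChains (g : Γ) {p : ℕ} {z : List Γ →₀ k} (hz : z ∈ orderedChains k Γ p) :
    cone k g z ∈ orderedChains k Γ (p + 1) := by
  refine map_mem_of_mem_supported k ?_ hz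
  rintro l ⟨-, hl⟩
  rw [cone_single]
  exact Finsupp.single_mem_supported k _ ⟨trivial, by simpa using hl⟩

end OrderedChains

section BarComplex

variable (k : Type*) [CommRing k] {Γ : Type*} [Group Γ]

/-- Left translation of ordered chains on a group. -/
noncomputable abbrev translate (g : Γ) : (List Γ →₀ k) →ₗ[k] (List Γ →₀ k) :=
  mapChains k (g * ·)

/-- The projection of ordered chains to coinvariants, where the orbit of a nonempty simplex is
represented by its translate starting at `1`, with that leading `1` omitted. The empty simplex is
sent to `0`. -/
noncomputable def coinvariants : (List Γ →₀ k) →ₗ[k] (List Γ →₀ k) :=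
  Finsupp.linearCombination k fun l => match l with
    | [] => 0
    | g :: l => Finsupp.single (l.map (g⁻¹ * ·)) 1

/-- The differential of the bar complex, in homogeneous coordinates: the list `[g₁, …, gₚ]` stands
for the orbit of the simplex `[1, g₁, …, gₚ]`. -/
noncomputable def barDifferential : (List Γ →₀ k) →ₗ[k] (List Γ →₀ k) :=
  coinvariants k ∘ₗ boundary k ∘ₗ cone k 1

/-- The equivariant operator with value `η l` at the simplex `1 :: l`, and `0` at the empty
simplex. -/
noncomputable def equivariantExtension (η : List Γ → (List Γ →₀ k)) :
    (List Γ →₀ k) →ₗ[k] (List Γ →₀ k) :=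
  Finsupp.linearCombination k fun l => match l with
    | [] => 0
    | g :: l => translate k g (η (l.map (g⁻¹ * ·)))

variable {k}

lemma translate_translate (g h : Γ) (z : List Γ →₀ k) :
    translate k g (translate k h z) = translate k (g * h) z := by
  simp [translate, mapChains_mapChains, Function.comp_def, ← mul_assoc]

@[simp] lemma coinvariants_single_nil (a : k) :
    coinvariants k (Finsupp.single ([] : List Γ) a) = 0 := by
  simp [coinvariants]

@[simp] lemma coinvariants_single_cons (g : Γ) (l : List Γ) (a : k) :
    coinvariants k (Finsupp.single (g :: l) a) = Finsupp.single (l.map (g⁻¹ * ·)) a := by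
  simp [coinvariants]

lemma coinvariants_translate (g : Γ) (z : List Γ →₀ k) :
    coinvariants k (translate k g z) = coinvariants k z := by
  induction z using Finsupp.induction_linear with
  | zero => simp
  | add z w hz hw => simp only [map_add, hz, hw]
  | single l a => cases l <;> simp [Function.comp_def, mul_assoc]

lemma coinvariants_cone_one (z : List Γ →₀ k) : coinvariants k (cone k 1 z) = z := by
  induction z using Finsupp.induction_linear with
  | zero => simp
  | add z w hz hw => simp only [map_add, hz, hw]
  | single l a => simp

lemma coinvariants_apply_of_equivariant {f : (List Γ →₀ k) →ₗ[k] (List Γ →₀ k)}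
    (hnil : f (Finsupp.single [] 1) = 0)
    (hf : ∀ g z, f (translate k g z) = translate k g (f z)) (z : List Γ →₀ k) :
    coinvariants k (f z) = coinvariants k (f (cone k 1 (coinvariants k z))) := by
  induction z using Finsupp.induction_linear with
  | zero => simp
  | add z w hz hw => simp only [map_add, hz, hw]
  | single l a =>
    rw [← mul_one a, ← smul_eq_mul, ← Finsupp.smul_single]
    simp only [map_smul]
    congr 1
    cases l with
    | nil => simp [hnil]
    | cons g l =>
      conv_rhs => rw [← coinvariants_translate g, ← hf]
      simp [Function.comp_def]

lemma coinvariants_boundary (z : List Γ →₀ k) :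
    coinvariants k (boundary k z) = barDifferential k (coinvariants k z) :=
  coinvariants_apply_of_equivariant (by simp [simplexBoundary_nil])
    (fun g => boundary_mapChains (g * ·)) z

lemma barDifferential_barDifferential (z : List Γ →₀ k) :
    barDifferential k (barDifferential k z) = 0 := by
  change barDifferential k (coinvariants k (boundary k (cone k 1 z))) = 0
  rw [← coinvariants_boundary, boundary_boundary, map_zero]

@[simp] lemma equivariantExtension_single_nil (η : List Γ → (List Γ →₀ k)) (a : k) :
    equivariantExtension k η (Finsupp.single [] a) = 0 := by
  simp [equivariantExtension]

@[simp] lemma equivariantExtension_single_cons (η : List Γ → (List Γ →₀ k)) (g : Γ) (l : List Γ)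
    (a : k) : equivariantExtension k η (Finsupp.single (g :: l) a) =
      a • translate k g (η (l.map (g⁻¹ * ·))) := by
  simp [equivariantExtension]

lemma equivariantExtension_translate (η : List Γ → (List Γ →₀ k)) (g : Γ) (z : List Γ →₀ k) :
    equivariantExtension k η (translate k g z) = translate k g (equivariantExtension k η z) := by
  induction z using Finsupp.induction_linear with
  | zero => simp
  | add z w hz hw => simp only [map_add, hz, hw]
  | single l a => cases l <;> simp [translate_translate, Function.comp_def, mul_assoc]

lemma coinvariants_mem_orderedChains {p : ℕ} {z : List Γ →₀ k}
    (hz : z ∈ orderedChains k Γ (p + 1)) : coinvariants k z ∈ orderedChains k Γ p := by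
  refine map_mem_of_mem_supported k ?_ hz
  rintro (_ | ⟨g, l⟩) ⟨-, hl⟩
  · simp at hl
  · rw [coinvariants_single_cons]
    exact Finsupp.single_mem_supported k _ ⟨trivial, by simpa using hl⟩

lemma barDifferential_mem_orderedChains {p : ℕ} {z : List Γ →₀ k}
    (hz : z ∈ orderedChains k Γ (p + 1)) : barDifferential k z ∈ orderedChains k Γ p :=
  coinvariants_mem_orderedChains (boundary_mem_orderedChains (cone_mem_orderedChains 1 hz))

end BarComplex

section RelativeVanishing

variable {k : Type*} [CommRing k] {Γ : Type*} [Group Γ] {S : Type*} {H : S → Subgroup Γ}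

/-- All entries of `l` lie in a common left coset of some `H s`. -/
def InCoset (H : S → Subgroup Γ) (l : List Γ) : Prop := ∃ s, ∀ g ∈ l, ∀ h ∈ l, g⁻¹ * h ∈ H s

/-- All entries of `l` lie in some `H s`. -/
def InSubgroup (H : S → Subgroup Γ) (l : List Γ) : Prop := ∃ s, ∀ g ∈ l, g ∈ H s

lemma isFaceClosed_inCoset : IsFaceClosed (InCoset H) := fun _ _ hl ⟨s, hs⟩ =>
  ⟨s, fun g hg h hh => hs g (hl.subset hg) h (hl.subset hh)⟩

lemma inCoset_map (g : Γ) (l : List Γ) : InCoset H (l.map (g * ·)) ↔ InCoset H l := by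
  simp [InCoset, mul_assoc]

lemma inCoset_cons (g : Γ) (l : List Γ) :
    InCoset H (g :: l) ↔ InSubgroup H (l.map (g⁻¹ * ·)) := by
  refine exists_congr fun s => ⟨fun h => ?_, fun h => ?_⟩
  · simpa using (h g List.mem_cons_self)
  · replace h : ∀ x ∈ g :: l, g⁻¹ * x ∈ H s := by simpa using h
    intro x hx y hy
    simpa [mul_assoc] using mul_mem (inv_mem (h x hx)) (h y hy)

lemma translate_mem_supported_inCoset (g : Γ) {z : List Γ →₀ k}
    (hz : z ∈ Finsupp.supported k k {l | InCoset H l}) :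
    translate k g z ∈ Finsupp.supported k k {l | InCoset H l} := by
  refine map_mem_of_mem_supported k (fun l hl => ?_) hz
  rw [mapChains_single]
  exact Finsupp.single_mem_supported k _ ((inCoset_map g l).2 hl)

lemma coinvariants_mem_supported_inSubgroup {z : List Γ →₀ k}
    (hz : z ∈ Finsupp.supported k k {l | InCoset H l}) :
    coinvariants k z ∈ Finsupp.supported k k {l | InSubgroup H l} := by
  refine map_mem_of_mem_supported k ?_ hz
  rintro (_ | ⟨g, l⟩) hl
  · simp
  · rw [coinvariants_single_cons]
    exact Finsupp.single_mem_supported k _ ((inCoset_cons g l).1 hl)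

/-- The equivariant extension of `η` is a homotopy, in degrees at most `p`, from the identity to a
map into the chains supported on cosets, and vanishes on the latter chains. -/
structure IsPartialContraction (H : S → Subgroup Γ) (p : ℕ) (η : List Γ → (List Γ →₀ k)) :
    Prop where
  eq_zero : ∀ l, InSubgroup H l → η l = 0
  mem_orderedChains : ∀ l, η l ∈ orderedChains k Γ (l.length + 2)
  homotopy : ∀ l, l.length < p → Finsupp.single (1 :: l) 1 - boundary k (η l) -
    equivariantExtension k η (simplexBoundary k (1 :: l)) ∈
      Finsupp.supported k k {l | InCoset H l}

namespace IsPartialContraction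

variable {p : ℕ} {η : List Γ → (List Γ →₀ k)} (hη : IsPartialContraction H p η)
include hη

lemma equivariantExtension_eq_zero {z : List Γ →₀ k}
    (hz : z ∈ Finsupp.supported k k {l | InCoset H l}) : equivariantExtension k η z = 0 := by
  refine map_eq_zero_of_mem_supported k ?_ hz
  rintro (_ | ⟨g, l⟩) hl
  · simp
  · simp [hη.eq_zero _ ((inCoset_cons g l).1 hl)]

lemma equivariantExtension_mem_orderedChains {q : ℕ} {z : List Γ →₀ k}
    (hz : z ∈ orderedChains k Γ q) : equivariantExtension k η z ∈ orderedChains k Γ (q + 1) := by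
  refine map_mem_of_mem_supported k ?_ hz
  rintro (_ | ⟨g, l⟩) ⟨-, rfl⟩
  · simp
  · rw [equivariantExtension_single_cons, one_smul]
    simpa using mapChains_mem_chains (f := (g * ·)) (fun _ _ => trivial)
      (hη.mem_orderedChains (l.map (g⁻¹ * ·)))

lemma sub_mem_supported [Nonempty S] {q : ℕ} (hq : q ≤ p) {z : List Γ →₀ k}
    (hz : z ∈ orderedChains k Γ q) :
    z - boundary k (equivariantExtension k η z) - equivariantExtension k η (boundary k z) ∈
      Finsupp.supported k k {l | InCoset H l} := by
  refine map_mem_of_mem_supported k (f := LinearMap.id -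
    boundary k ∘ₗ equivariantExtension k η - equivariantExtension k η ∘ₗ boundary k) ?_ hz
  rintro (_ | ⟨g, l⟩) ⟨-, rfl⟩
  · simpa [simplexBoundary_nil] using
      Finsupp.single_mem_supported k (1 : k) (s := {l | InCoset H l})
        ⟨Classical.arbitrary S, by simp⟩
  · have h := translate_mem_supported_inCoset g
      (hη.homotopy (l.map (g⁻¹ * ·)) (by simpa using hq))
    simpa [← boundary_mapChains, ← equivariantExtension_translate, mapChains_simplexBoundary,
      Function.comp_def] using h

lemma exists_homotopy_value [Nonempty S] {c : ℕ} (hH : IsAcyclicBelow k (InCoset H) c)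
    (hp : p < c) {l : List Γ} (hl : l.length = p) :
    ∃ w ∈ orderedChains k Γ (p + 2), Finsupp.single (1 :: l) 1 - boundary k w -
      equivariantExtension k η (simplexBoundary k (1 :: l)) ∈
        Finsupp.supported k k {l | InCoset H l} := by
  have hbd : simplexBoundary k (1 :: l) ∈ orderedChains k Γ p :=
    simplexBoundary_mem_orderedChains (by simp [hl])
  set y := Finsupp.single (1 :: l) 1 - equivariantExtension k η (simplexBoundary k (1 :: l))
    with hy
  have hyC : y ∈ orderedChains k Γ (p + 1) :=
    Submodule.sub_mem _ (Finsupp.single_mem_supported k _ ⟨trivial, by simp [hl]⟩)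
      (hη.equivariantExtension_mem_orderedChains hbd)
  have hdy : boundary k y ∈ chains k (InCoset H) p := by
    refine mem_chains_of_mem_supported (boundary_mem_orderedChains hyC) ?_
    simpa [hy, boundary_simplexBoundary] using hη.sub_mem_supported le_rfl hbd
  obtain ⟨u, hu, huy⟩ := hH p hp _ hdy (boundary_boundary k y)
  have huC : u ∈ orderedChains k Γ (p + 1) := fun x hx => ⟨trivial, (hu hx).2⟩
  refine ⟨cone k 1 (y - u), cone_mem_orderedChains 1 (Submodule.sub_mem _ hyC huC), ?_⟩
  rw [boundary_cone, map_sub (boundary k), huy, sub_self, map_zero, sub_zero, sub_right_comm,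
    ← hy, sub_sub_cancel]
  exact mem_supported_of_mem_chains hu

end IsPartialContraction

lemma equivariantExtension_congr {η η' : List Γ → (List Γ →₀ k)} {q : ℕ}
    (h : ∀ l : List Γ, l.length < q → η l = η' l) {z : List Γ →₀ k}
    (hz : z ∈ orderedChains k Γ q) :
    equivariantExtension k η z = equivariantExtension k η' z := by
  rw [← sub_eq_zero, ← LinearMap.sub_apply]
  refine map_eq_zero_of_mem_supported k ?_ hz
  rintro (_ | ⟨g, l⟩) ⟨-, rfl⟩
  · simp
  · simp [h (l.map (g⁻¹ * ·)) (by simp)]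

lemma exists_isPartialContraction [Nonempty S] {c : ℕ} (hH : IsAcyclicBelow k (InCoset H) c)
    {p : ℕ} (hp : p ≤ c) : ∃ η : List Γ → (List Γ →₀ k), IsPartialContraction H p η := by
  classical
  induction p with
  | zero => exact ⟨0, fun _ _ => rfl, fun _ => Submodule.zero_mem _, fun _ h => by simp at h⟩
  | succ p ih =>
    obtain ⟨η, hη⟩ := ih (by omega)
    choose! w hw hhomotopy using
      fun (l : List Γ) (hl : l.length = p) => hη.exists_homotopy_value hH hp hl
    let η' : List Γ → (List Γ →₀ k) := fun l =>
      if l.length = p ∧ ¬ InSubgroup H l then w l else η l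
    have hη' : ∀ l : List Γ, l.length < p → η' l = η l := fun l hl => if_neg fun h => by omega
    have hext : ∀ l : List Γ, l.length ≤ p → equivariantExtension k η' (simplexBoundary k (1 :: l))
        = equivariantExtension k η (simplexBoundary k (1 :: l)) := fun l hl =>
      equivariantExtension_congr (fun m hm => hη' m (by omega))
        (simplexBoundary_mem_orderedChains rfl)
    refine ⟨η', fun l hl => ?_, fun l => ?_, fun l hl => ?_⟩
    · exact (if_neg fun h => h.2 hl).trans (hη.eq_zero l hl)
    · by_cases h : l.length = p ∧ ¬ InSubgroup H l
      · simpa only [η', if_pos h, h.1] using hw l h.1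
      · simpa only [η', if_neg h] using hη.mem_orderedChains l
    rw [hext l (by omega)]
    by_cases h : l.length = p ∧ ¬ InSubgroup H l
    · simpa only [η', if_pos h] using hhomotopy l h.1
    simp only [η', if_neg h]
    rcases (Nat.lt_succ_iff.1 hl).lt_or_eq with hlt | heq
    · exact hη.homotopy l hlt
    have hl1 : InCoset H (1 :: l) := (inCoset_cons 1 l).2 (by simpa [heq] using h)
    have hbd : simplexBoundary k (1 :: l) ∈ Finsupp.supported k k {l | InCoset H l} :=
      Finsupp.supported_mono (fun m hm => isFaceClosed_inCoset hm.1 hl1)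
        (simplexBoundary_mem_supported k (1 :: l))
    rw [hη.eq_zero l (by simpa [heq] using h), hη.equivariantExtension_eq_zero hbd, map_zero,
      sub_zero, sub_zero]
    exact Finsupp.single_mem_supported k _ hl1

theorem exists_sub_barDifferential_mem [Nonempty S] {c : ℕ}
    (hH : IsAcyclicBelow k (InCoset H) c) {p : ℕ} (hp : p < c) {z : List Γ →₀ k}
    (hz : z ∈ orderedChains k Γ p)
    (hdz : barDifferential k z ∈ Finsupp.supported k k {l | InSubgroup H l}) :
    ∃ y ∈ orderedChains k Γ (p + 1), z - barDifferential k y ∈ chains k (InSubgroup H) p := by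
  obtain ⟨η, hη⟩ := exists_isPartialContraction hH hp
  have hcone := cone_mem_orderedChains 1 hz
  have hzero : coinvariants k (equivariantExtension k η (boundary k (cone k 1 z))) = 0 := by
    rw [coinvariants_apply_of_equivariant (equivariantExtension_single_nil η 1)
      (equivariantExtension_translate η), hη.equivariantExtension_eq_zero, map_zero]
    refine map_mem_of_mem_supported k (fun l hl => ?_) hdz
    rw [cone_single]
    exact Finsupp.single_mem_supported k _ ((inCoset_cons 1 l).2 (by simpa using hl))
  have hsub := coinvariants_mem_supported_inSubgroup (hη.sub_mem_supported le_rfl hcone)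
  rw [map_sub, map_sub, hzero, sub_zero, coinvariants_cone_one, coinvariants_boundary] at hsub
  have hy := coinvariants_mem_orderedChains (hη.equivariantExtension_mem_orderedChains hcone)
  exact ⟨_, hy, mem_chains_of_mem_supported
    (Submodule.sub_mem _ hz (barDifferential_mem_orderedChains hy)) hsub⟩

end RelativeVanishing

section CommonKernel

variable {R : Type*} [CommRing R] {ι : Type*} [Fintype ι]

/-- The common kernel of a list of covectors. -/
def commonKernel (Φ : List (ι → R)) : Submodule R (ι → R) where
  carrier := {x | ∀ φ ∈ Φ, φ ⬝ᵥ x = 0}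
  add_mem' hx hy φ hφ := by rw [dotProduct_add, hx φ hφ, hy φ hφ, add_zero]
  zero_mem' φ _ := dotProduct_zero φ
  smul_mem' c x hx φ hφ := by rw [dotProduct_smul, hx φ hφ, smul_zero]

lemma mem_commonKernel {Φ : List (ι → R)} {x : ι → R} :
    x ∈ commonKernel Φ ↔ ∀ φ ∈ Φ, φ ⬝ᵥ x = 0 := Iff.rfl

lemma mem_commonKernel_cons {Φ : List (ι → R)} {φ x : ι → R} :
    x ∈ commonKernel (φ :: Φ) ↔ φ ⬝ᵥ x = 0 ∧ x ∈ commonKernel Φ := List.forall_mem_cons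

-- A nonzero ideal of a Dedekind domain becomes principal, generated by one of its own elements,
-- after inverting the complement of a prime.
lemma exists_mem_forall_mul_eq_mul [IsDedekindDomain R] (P : Ideal R) [hP : P.IsPrime]
    {J : Ideal R} (hJ : J ≠ ⊥) : ∃ y ∈ J, ∀ x ∈ J, ∃ c ∉ P, ∃ t, c * x = t * y := by
  have hJP : ¬ J ≤ J * P := fun h => hP.ne_top <| by
    rw [← Ideal.one_eq_top]
    exact mul_left_cancel₀ hJ ((mul_one J).symm ▸ le_antisymm Ideal.mul_le_left h)
  obtain ⟨y, hy, hyP⟩ := SetLike.not_le_iff_exists.1 hJP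
  obtain ⟨C, hC⟩ := Ideal.dvd_span_singleton.2 hy
  have hCP : ¬ C ≤ P := fun h =>
    hyP (Ideal.mul_mono_right h (hC ▸ Ideal.mem_span_singleton_self y))
  obtain ⟨c, hc, hcP⟩ := SetLike.not_le_iff_exists.1 hCP
  refine ⟨y, hy, fun x hx => ⟨c, hcP, ?_⟩⟩
  have hcx : c * x ∈ Ideal.span {y} := hC ▸ mul_comm x c ▸ Ideal.mul_mem_mul hx hc
  obtain ⟨t, ht⟩ := Ideal.mem_span_singleton'.1 hcx
  exact ⟨t, ht.symm⟩

variable {F : Type*} [Field F] (f : R →+* F)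

/-- The `F`-span of the image of a submodule under a coordinatewise ring homomorphism. -/
def spanImage (W : Submodule R (ι → R)) : Submodule F (ι → F) :=
  Submodule.span F ((fun w => f ∘ w) '' (W : Set (ι → R)))

lemma exists_spanImage_le_sup_span_singleton [IsDedekindDomain R] (φ : ι → R)
    (Φ : List (ι → R)) : ∃ v : ι → F,
      spanImage f (commonKernel Φ) ≤
        spanImage f (commonKernel (φ :: Φ)) ⊔ Submodule.span F {v} := by
  have hP : (RingHom.ker f).IsPrime := RingHom.ker_isPrime f
  by_cases h0 : (commonKernel Φ).map (dotProductBilin R R φ) = ⊥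
  · refine ⟨0, le_sup_of_le_left (Submodule.span_mono (Set.image_mono fun x hx => ?_))⟩
    have hφx : φ ⬝ᵥ x ∈ (commonKernel Φ).map (dotProductBilin R R φ) := ⟨x, hx, rfl⟩
    rw [h0] at hφx
    exact mem_commonKernel_cons.2 ⟨hφx, hx⟩
  obtain ⟨_, ⟨u, hu, rfl⟩, hmin⟩ := exists_mem_forall_mul_eq_mul (RingHom.ker f) h0
  refine ⟨f ∘ u, Submodule.span_le.2 ?_⟩
  rintro _ ⟨w, hw, rfl⟩
  obtain ⟨c, hc, t, hct⟩ := hmin _ ⟨w, hw, rfl⟩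
  have hfc : f c ≠ 0 := hc
  have hker : c • w - t • u ∈ commonKernel (φ :: Φ) := by
    refine mem_commonKernel_cons.2 ⟨?_, sub_mem (Submodule.smul_mem _ c hw)
      (Submodule.smul_mem _ t hu)⟩
    rw [dotProduct_sub, dotProduct_smul, dotProduct_smul]
    exact sub_eq_zero.2 hct
  have hfw : f ∘ w = (f c)⁻¹ • (f ∘ (c • w - t • u)) + ((f c)⁻¹ * f t) • (f ∘ u) := by
    ext i
    simp only [Function.comp_apply, Pi.add_apply, Pi.smul_apply, Pi.sub_apply, smul_eq_mul,
      map_sub, map_mul]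
    field_simp
    ring
  change f ∘ w ∈ _
  rw [hfw]
  exact add_mem
    (Submodule.mem_sup_left (Submodule.smul_mem _ _ (Submodule.subset_span ⟨_, hker, rfl⟩)))
    (Submodule.mem_sup_right (Submodule.smul_mem _ _ (Submodule.mem_span_singleton_self _)))

lemma spanImage_commonKernel_nil : spanImage f (commonKernel ([] : List (ι → R))) = ⊤ := by
  classical
  refine eq_top_iff.2 fun x _ => ?_
  rw [pi_eq_sum_univ' x]
  refine Submodule.sum_mem _ fun i _ => Submodule.smul_mem _ _ (Submodule.subset_span
    ⟨Pi.single i 1, by simp [mem_commonKernel], ?_⟩)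
  ext j
  rcases eq_or_ne j i with rfl | hj
  · simp
  · simp [hj]

lemma card_le_finrank_spanImage_add_length [IsDedekindDomain R] (Φ : List (ι → R)) :
    Fintype.card ι ≤ Module.finrank F (spanImage f (commonKernel Φ)) + Φ.length := by
  induction Φ with
  | nil => rw [spanImage_commonKernel_nil, finrank_top]; simp
  | cons φ Φ ih =>
    obtain ⟨v, hv⟩ := exists_spanImage_le_sup_span_singleton f φ Φ
    have hle := (Submodule.finrank_mono hv).trans
      (Submodule.finrank_add_le_finrank_add_finrank _ _)
    have hv1 : Module.finrank F (Submodule.span F {v}) ≤ 1 := by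
      simpa using finrank_span_le_card (R := F) ({v} : Set (ι → F))
    rw [List.length_cons]
    omega

lemma exists_map_dotProduct_ne_zero [IsDedekindDomain R] {Φ Ψ : List (ι → R)}
    (h : Φ.length + Ψ.length < Fintype.card ι) :
    ∃ x ∈ commonKernel Φ, ∃ β ∈ commonKernel Ψ, f (β ⬝ᵥ x) ≠ 0 := by
  classical
  by_contra! hc
  have hle : (spanImage f (commonKernel Ψ)).map (dotProductEquiv F ι).toLinearMap ≤
      (spanImage f (commonKernel Φ)).dualAnnihilator := by
    rw [Submodule.map_le_iff_le_comap, spanImage, Submodule.span_le]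
    rintro _ ⟨β, hβ, rfl⟩
    suffices spanImage f (commonKernel Φ) ≤ LinearMap.ker (dotProductEquiv F ι (f ∘ β)) from
      (Submodule.mem_dualAnnihilator _).2 fun w hw => this hw
    rw [spanImage, Submodule.span_le]
    rintro _ ⟨x, hx, rfl⟩
    simpa only [SetLike.mem_coe, LinearMap.mem_ker, dotProductEquiv_apply_apply,
      ← RingHom.map_dotProduct] using hc x hx β hβ
  have hmono := Submodule.finrank_mono hle
  rw [LinearEquiv.finrank_map_eq] at hmono
  have hdual := Subspace.finrank_add_finrank_dualAnnihilator_eq (spanImage f (commonKernel Φ))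
  rw [Module.finrank_fintype_fun_eq_card] at hdual
  have hΦ := card_le_finrank_spanImage_add_length f Φ
  have hΨ := card_le_finrank_spanImage_add_length f Ψ
  omega

lemma exists_add_smul_dotProduct_notMem [IsDedekindDomain R] {Φ Ψ : List (ι → R)}
    (h : Φ.length + Ψ.length < Fintype.card ι) (P : Ideal R) [P.IsPrime] (ψ : ι → R) {m : R}
    (hm : m ∉ P) : ∃ β ∈ commonKernel Ψ, ∃ x ∈ commonKernel Φ, (ψ + m • β) ⬝ᵥ x ∉ P := by
  by_cases hψ : ∃ x ∈ commonKernel Φ, ψ ⬝ᵥ x ∉ P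
  · obtain ⟨x, hx, hxP⟩ := hψ
    exact ⟨0, zero_mem _, x, hx, by simpa using hxP⟩
  push Not at hψ
  obtain ⟨x, hx, β, hβ, hne⟩ := exists_map_dotProduct_ne_zero (algebraMap R P.ResidueField) h
  rw [Ne, Ideal.algebraMap_residueField_eq_zero] at hne
  refine ⟨β, hβ, x, hx, ?_⟩
  rw [add_dotProduct, smul_dotProduct, smul_eq_mul, Ideal.add_mem_iff_right _ (hψ x hx)]
  exact Ideal.IsPrime.mul_notMem ‹_› hm hne

-- Chinese remainder theorem.
lemma exists_mem_forall_sub_mem_smul [IsDedekindDomain R] {M : Type*} [AddCommGroup M]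
    [Module R M] {W : Submodule R M} {β : IsDedekindDomain.HeightOneSpectrum R → M}
    (hβ : ∀ v, β v ∈ W) (s : Finset (IsDedekindDomain.HeightOneSpectrum R)) :
    ∃ B ∈ W, ∀ v ∈ s, B - β v ∈ v.asIdeal • W := by
  classical
  have hcrt (v : IsDedekindDomain.HeightOneSpectrum R) : ∃ e : R, ∀ w ∈ s,
      e - (if w = v then 1 else 0) ∈ w.asIdeal := by
    obtain ⟨e, he⟩ := IsDedekindDomain.exists_forall_sub_mem_ideal (s := s)
      (fun v : IsDedekindDomain.HeightOneSpectrum R => v.asIdeal) (fun _ => 1)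
      (fun v _ => v.prime) (fun v _ w _ hne h => hne (IsDedekindDomain.HeightOneSpectrum.ext h))
      (fun w => if w.1 = v then 1 else 0)
    exact ⟨e, by simpa using he⟩
  choose e he using hcrt
  refine ⟨∑ v ∈ s, e v • β v, sum_mem fun v _ => W.smul_mem _ (hβ v), fun w hw => ?_⟩
  have hsum : ∑ v ∈ s, e v • β v - β w =
      ∑ v ∈ s, (e v - (if w = v then 1 else 0)) • β v := by
    simp [sub_smul, Finset.sum_sub_distrib, hw]
  rw [hsum]
  exact sum_mem fun v _ => Submodule.smul_mem_smul (he v w hw) (hβ v)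

-- The values of `ψ + m • β` on `commonKernel Φ` form an ideal containing `ψ ⬝ᵥ w`, so only the
-- finitely many primes containing `ψ ⬝ᵥ w` have to be avoided.
theorem exists_add_smul_dotProduct_eq_one [IsDedekindDomain R] {Φ Ψ : List (ι → R)}
    (h : Φ.length + Ψ.length + 1 < Fintype.card ι) {ψ w : ι → R} (hw : w ∈ commonKernel Φ)
    (hψw : ψ ⬝ᵥ w ≠ 0) {m : R} (hm : IsCoprime (ψ ⬝ᵥ w) m) :
    ∃ β ∈ commonKernel (w :: Ψ), ∃ x ∈ commonKernel Φ, (ψ + m • β) ⬝ᵥ x = 1 := by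
  have hlocal (v : IsDedekindDomain.HeightOneSpectrum R) : ∃ β ∈ commonKernel (w :: Ψ),
      ψ ⬝ᵥ w ∈ v.asIdeal → ∃ x ∈ commonKernel Φ, (ψ + m • β) ⬝ᵥ x ∉ v.asIdeal := by
    by_cases hv : ψ ⬝ᵥ w ∈ v.asIdeal
    · have hmv : m ∉ v.asIdeal := fun hmv => by
        obtain ⟨a, b, hab⟩ := hm
        exact v.asIdeal.one_notMem (hab ▸ add_mem (v.asIdeal.mul_mem_left a hv)
          (v.asIdeal.mul_mem_left b hmv))
      obtain ⟨β, hβ, hx⟩ := exists_add_smul_dotProduct_notMem (Φ := Φ) (Ψ := w :: Ψ)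
        (by rw [List.length_cons]; omega) v.asIdeal ψ hmv
      exact ⟨β, hβ, fun _ => hx⟩
    · exact ⟨0, zero_mem _, fun h => absurd h hv⟩
  choose β hβ hx using hlocal
  have hfin := Ideal.finite_factors (R := R) (I := Ideal.span {ψ ⬝ᵥ w}) (by simpa using hψw)
  obtain ⟨B, hB, hBβ⟩ := exists_mem_forall_sub_mem_smul hβ hfin.toFinset
  refine ⟨B, hB, ?_⟩
  let J : Ideal R := (commonKernel Φ).map (dotProductBilin R R (ψ + m • B))
  suffices J = ⊤ by exact (Ideal.eq_top_iff_one J).1 this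
  by_contra hJ
  obtain ⟨M, hM, hJM⟩ := Ideal.exists_le_maximal J hJ
  have hψM : ψ ⬝ᵥ w ∈ M := hJM ⟨w, hw, by
    change (ψ + m • B) ⬝ᵥ w = _
    rw [add_dotProduct, smul_dotProduct, dotProduct_comm B, (mem_commonKernel_cons.1 hB).1,
      smul_zero, add_zero]⟩
  let v : IsDedekindDomain.HeightOneSpectrum R :=
    ⟨M, hM.isPrime, fun hbot => hψw (by simpa [hbot] using hψM)⟩
  obtain ⟨x, hxΦ, hxM⟩ := hx v hψM
  have hBx : (B - β v) ⬝ᵥ x ∈ M := by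
    have hsmul := hBβ v (by simpa [Ideal.dvd_span_singleton] using hψM)
    have hmap := Submodule.mem_map_of_mem (f := (dotProductBilin R R).flip x) hsmul
    rw [Submodule.map_smul'', smul_eq_mul] at hmap
    exact Ideal.mul_le_left hmap
  refine hxM ?_
  have hsub : (ψ + m • β v) ⬝ᵥ x = (ψ + m • B) ⬝ᵥ x - m * ((B - β v) ⬝ᵥ x) := by
    simp only [add_dotProduct, smul_dotProduct, sub_dotProduct, smul_eq_mul]
    ring
  rw [hsub]
  exact sub_mem (hJM ⟨x, hxΦ, rfl⟩) (M.mul_mem_left m hBx)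

lemma exists_add_dotProduct_eq_one [IsDedekindDomain R] {Φ Ψ : List (ι → R)}
    (h : Φ.length + Ψ.length + 1 < Fintype.card ι) (ψ : ι → R) :
    ∃ β ∈ commonKernel Ψ, ∃ x ∈ commonKernel Φ, (ψ + β) ⬝ᵥ x = 1 := by
  have hne : ∃ β ∈ commonKernel Ψ, ∃ w ∈ commonKernel Φ, (ψ + β) ⬝ᵥ w ≠ 0 := by
    simpa using exists_add_smul_dotProduct_notMem (Φ := Φ) (Ψ := Ψ) (by omega) (⊥ : Ideal R) ψ
      (m := 1) (by simp)
  obtain ⟨β, hβ, w, hw, hne⟩ := hne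
  obtain ⟨γ, hγ, x, hx, h1⟩ := exists_add_smul_dotProduct_eq_one h hw hne isCoprime_one_right
  exact ⟨β + γ, add_mem hβ (mem_commonKernel_cons.1 hγ).2, x, hx, by
    rwa [one_smul, add_assoc] at h1⟩

end CommonKernel

section DualPair

open Matrix

variable {R : Type*} [CommRing R] {ι : Type*} [DecidableEq ι]

lemma map_comp_single_one {S : Type*} [CommRing S] (f : R →+* S) (s : ι) :
    f ∘ Pi.single s 1 = Pi.single s 1 := by
  ext i
  rw [Function.comp_apply, Pi.apply_single (fun _ => f) (fun _ => map_zero f), map_one]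

variable [Fintype ι]

lemma exists_mem_commonKernel_comp_eq_single {S : Type*} [CommRing S] {f : R →+* S} {J : Type*}
    {idx : J → ι} {φ : J → ι → R} (hφ : ∀ j, f ∘ φ j = Pi.single (idx j) 1) {F : List J}
    (hF : (F.map idx).Nodup) {t : ι} (ht : t ∉ F.map idx) :
    ∃ w ∈ commonKernel (F.map φ), f ∘ w = Pi.single t 1 := by
  induction F generalizing t with
  | nil => exact ⟨Pi.single t 1, by simp [mem_commonKernel], map_comp_single_one f t⟩
  | cons j F ih =>
    simp only [List.map_cons, List.nodup_cons, List.mem_cons, not_or] at hF ht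
    obtain ⟨w₁, hw₁, hf₁⟩ := ih hF.2 ht.2
    obtain ⟨w₂, hw₂, hf₂⟩ := ih hF.2 hF.1
    have hφ₁ : f (φ j ⬝ᵥ w₁) = 0 := by simp [RingHom.map_dotProduct, hφ, hf₁, ht.1]
    have hφ₂ : f (φ j ⬝ᵥ w₂) = 1 := by simp [RingHom.map_dotProduct, hφ, hf₂]
    refine ⟨(φ j ⬝ᵥ w₂) • w₁ - (φ j ⬝ᵥ w₁) • w₂, mem_commonKernel_cons.2 ⟨?_, ?_⟩, ?_⟩
    · simp only [dotProduct_sub, dotProduct_smul, smul_eq_mul]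
      ring
    · exact sub_mem (Submodule.smul_mem _ _ hw₁) (Submodule.smul_mem _ _ hw₂)
    · ext i
      simp [hφ₁, hφ₂, ← hf₁]

variable (I : Ideal R)

/-- A vertex of the complex of partial bases of `Rⁿ` congruent modulo `I` to standard basis vectors
with indices in `A`: a vector together with a covector taking the value `1` on it, both congruent to
the same standard basis vector. -/
@[ext] structure DualPair (A : Finset ι) where
  index : A
  vec : ι → R
  covec : ι → R
  vec_congr : Ideal.Quotient.mk I ∘ vec = Pi.single index.1 1
  covec_congr : Ideal.Quotient.mk I ∘ covec = Pi.single index.1 1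
  covec_dotProduct_vec : covec ⬝ᵥ vec = 1

variable {I} {A : Finset ι}

namespace DualPair

/-- Two pairs are adjacent if they are equal, or if they have different indices and each covector
vanishes on the other vector. -/
def Adj (x y : DualPair I A) : Prop :=
  x = y ∨ x.index ≠ y.index ∧ x.covec ⬝ᵥ y.vec = 0 ∧ y.covec ⬝ᵥ x.vec = 0

lemma isColoredGraph_adj : IsColoredGraph (Adj (I := I) (A := A)) index where
  refl _ := Or.inl rfl
  symm h := h.imp Eq.symm fun h => ⟨h.1.symm, h.2.2, h.2.1⟩
  eq_of_color_eq h hidx := h.resolve_right fun h => h.1 hidx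

-- A vector `w` and a covector `ψ` of the required residue exist, but `ψ ⬝ᵥ w = a` is only congruent
-- to `1`; since `a` and `1 - a` are coprime, correcting both by multiples of `1 - a ∈ I` makes the
-- pairing equal to `1`.
lemma exists_index_eq_forall_adj [IsDedekindDomain R] (hI : I ≠ ⊤) {F : List (DualPair I A)}
    (hF : (F.map index).Nodup) (hc : 2 * F.length + 1 < Fintype.card ι) {t : A}
    (ht : t ∉ F.map index) : ∃ y : DualPair I A, y.index = t ∧ ∀ x ∈ F, y.Adj x := by
  have hF' : (F.map fun x => x.index.1).Nodup := by
    simpa [Function.comp_def] using hF.map Subtype.val_injective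
  have ht' : t.1 ∉ F.map fun x => x.index.1 := fun h => by
    obtain ⟨x, hx, hxt⟩ := List.mem_map.1 h
    exact ht (List.mem_map.2 ⟨x, hx, Subtype.ext hxt⟩)
  obtain ⟨w, hw, hwI⟩ := exists_mem_commonKernel_comp_eq_single (fun x => x.covec_congr) hF' ht'
  obtain ⟨ψ, hψ, hψI⟩ := exists_mem_commonKernel_comp_eq_single (fun x => x.vec_congr) hF' ht'
  have hmk : Ideal.Quotient.mk I (ψ ⬝ᵥ w) = 1 := by
    simp [RingHom.map_dotProduct, hwI, hψI]
  have : Nontrivial (R ⧸ I) := Ideal.Quotient.nontrivial_iff.2 hI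
  have hne : ψ ⬝ᵥ w ≠ 0 := fun h => one_ne_zero (hmk.symm.trans (by rw [h, map_zero]))
  obtain ⟨β, hβ, x, hx, hβx⟩ := exists_add_smul_dotProduct_eq_one (Ψ := F.map vec)
    (m := 1 - ψ ⬝ᵥ w) (by simp; omega) hw hne ⟨1, 1, by ring⟩
  obtain ⟨hβw, hβ⟩ := mem_commonKernel_cons.1 hβ
  have hcongr {u v : ι → R} (hu : Ideal.Quotient.mk I ∘ u = Pi.single t.1 1) :
      Ideal.Quotient.mk I ∘ (u + (1 - ψ ⬝ᵥ w) • v) = Pi.single t.1 1 := by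
    rw [← hu]
    ext i
    simp [hmk]
  refine ⟨⟨t, w + (1 - ψ ⬝ᵥ w) • x, ψ + (1 - ψ ⬝ᵥ w) • β, hcongr hwI, hcongr hψI, ?_⟩, rfl,
    fun y hy => Or.inr ⟨?_, ?_, ?_⟩⟩
  · rw [dotProduct_add, dotProduct_smul, hβx, add_dotProduct, smul_dotProduct, dotProduct_comm β,
      hβw]
    simp
  · rintro rfl
    exact ht (List.mem_map_of_mem hy)
  · rw [dotProduct_comm]
    exact add_mem hψ (Submodule.smul_mem _ _ hβ) y.vec (List.mem_map_of_mem hy)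
  · exact add_mem hw (Submodule.smul_mem _ _ hx) y.covec (List.mem_map_of_mem hy)

lemma exists_injective_forall_adj [IsDedekindDomain R] (hI : I ≠ ⊤) {Q : ℕ}
    (hA : 2 * Q + 2 ≤ A.card) {F : List (DualPair I A)} (hF : Set.InjOn index {x | x ∈ F})
    (hFQ : F.length ≤ Q) :
    ∃ y : Fin Q → DualPair I A, Function.Injective (index ∘ y) ∧ ∀ i, ∀ x ∈ F, (y i).Adj x := by
  classical
  have hlen : F.dedup.length ≤ Q := (List.dedup_sublist F).length_le.trans hFQ
  have hnodup : (F.dedup.map index).Nodup := F.nodup_dedup.map_on fun x hx y hy h =>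
    hF (List.mem_dedup.1 hx) (List.mem_dedup.1 hy) h
  have hAι : A.card ≤ Fintype.card ι := Finset.card_le_univ A
  have hfree : Q ≤ (F.dedup.map index).toFinsetᶜ.card := by
    have h := List.toFinset_card_le (F.dedup.map index)
    rw [List.length_map] at h
    rw [Finset.card_compl, Fintype.card_coe]
    omega
  obtain ⟨e⟩ : Nonempty (Fin Q ↪ ((F.dedup.map index).toFinsetᶜ : Finset A)) :=
    Function.Embedding.nonempty_of_card_le (by rwa [Fintype.card_fin, Fintype.card_coe])
  have hex (i : Fin Q) : ∃ y : DualPair I A, y.index = (e i).1 ∧ ∀ x ∈ F.dedup, y.Adj x :=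
    exists_index_eq_forall_adj hI hnodup (by omega) fun h =>
      Finset.mem_compl.1 (e i).2 (List.mem_toFinset.2 h)
  choose y hidx hadj using hex
  refine ⟨y, fun i j hij => e.injective (Subtype.ext ?_), fun i x hx =>
    hadj i x (List.mem_dedup.2 hx)⟩
  rw [← hidx, ← hidx]
  exact hij

/-- The pair consisting of a standard basis vector and its dual. -/
def std (s : A) : DualPair I A where
  index := s
  vec := Pi.single s 1
  covec := Pi.single s 1
  vec_congr := map_comp_single_one _ _
  covec_congr := map_comp_single_one _ _
  covec_dotProduct_vec := by simp

lemma adj_std_std (s t : A) : Adj (I := I) (std s) (std t) := by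
  by_cases h : s = t
  · exact Or.inl (h ▸ rfl)
  · have hne : s.1 ≠ t.1 := fun hst => h (Subtype.ext hst)
    exact Or.inr ⟨h, by simp [std, hne], by simp [std, hne.symm]⟩

end DualPair

end DualPair

section Transvections

open Matrix

variable {R : Type*} [CommRing R] {ι : Type*} [Fintype ι] [DecidableEq ι]

/-- The transvection `x ↦ x + (ξ ⬝ᵥ x) • u`, as an invertible matrix. -/
def transvection (u ξ : ι → R) (h : ξ ⬝ᵥ u = 0) : GL ι R where
  val := 1 + vecMulVec u ξ
  inv := 1 - vecMulVec u ξ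
  val_inv := by
    have hsq : vecMulVec u ξ * vecMulVec u ξ = 0 := by simp [vecMulVec_mul_vecMulVec, h]
    rw [add_mul, mul_sub, mul_sub, hsq]
    simp
  inv_val := by
    have hsq : vecMulVec u ξ * vecMulVec u ξ = 0 := by simp [vecMulVec_mul_vecMulVec, h]
    rw [sub_mul, mul_add, mul_add, hsq]
    simp

variable {u ξ : ι → R} (h : ξ ⬝ᵥ u = 0) (x : ι → R)

lemma transvection_mulVec : (transvection u ξ h).1 *ᵥ x = x + (ξ ⬝ᵥ x) • u := by
  change (1 + vecMulVec u ξ) *ᵥ x = _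
  rw [add_mulVec, one_mulVec, vecMulVec_mulVec]
  ext i
  simp [mul_comm]

lemma vecMul_transvection : x ᵥ* (transvection u ξ h).1 = x + (x ⬝ᵥ u) • ξ := by
  change x ᵥ* (1 + vecMulVec u ξ) = _
  rw [vecMul_add, vecMul_one, vecMul_vecMulVec]

lemma vecMul_transvection_inv :
    x ᵥ* ((transvection u ξ h)⁻¹ : GL ι R).1 = x - (x ⬝ᵥ u) • ξ := by
  change x ᵥ* (1 - vecMulVec u ξ) = _
  rw [vecMul_sub, vecMul_one, vecMul_vecMulVec]

end Transvections

section PrincipalCongruenceSubgroup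

open Matrix

variable {R : Type*} [CommRing R] {ι : Type*} [Fintype ι] [DecidableEq ι] {I : Ideal R}

variable (ι I) in
/-- The kernel of the reduction map `GL ι R → GL ι (R ⧸ I)`. -/
abbrev principalCongruenceSubgroup : Subgroup (GL ι R) :=
  (GeneralLinearGroup.map (Ideal.Quotient.mk I)).ker

lemma mem_principalCongruenceSubgroup {g : GL ι R} :
    g ∈ principalCongruenceSubgroup ι I ↔ ∀ i j, g.1 i j - (1 : Matrix ι ι R) i j ∈ I := by
  rw [MonoidHom.mem_ker, Matrix.GeneralLinearGroup.ext_iff]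
  refine forall₂_congr fun i j => ?_
  rw [GeneralLinearGroup.map_apply, ← Ideal.Quotient.eq_zero_iff_mem, map_sub, sub_eq_zero,
    Units.val_one, one_apply, one_apply, apply_ite (Ideal.Quotient.mk I), map_one, map_zero]

lemma transvection_mem {u ξ : ι → R} (h : ξ ⬝ᵥ u = 0) (hI : ∀ i j, u i * ξ j ∈ I) :
    transvection u ξ h ∈ principalCongruenceSubgroup ι I :=
  mem_principalCongruenceSubgroup.2 fun i j => by simpa [transvection, vecMulVec_apply] using hI i j

lemma map_mk_of_mem {g : GL ι R} (hg : g ∈ principalCongruenceSubgroup ι I) :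
    g.1.map (Ideal.Quotient.mk I) = 1 := congrArg Units.val hg

lemma mk_comp_mulVec {g : GL ι R} (hg : g ∈ principalCongruenceSubgroup ι I) (v : ι → R) :
    Ideal.Quotient.mk I ∘ (g.1 *ᵥ v) = Ideal.Quotient.mk I ∘ v := by
  ext i
  simp only [Function.comp_apply, RingHom.map_mulVec, map_mk_of_mem hg, one_mulVec]

lemma mk_comp_vecMul {g : GL ι R} (hg : g ∈ principalCongruenceSubgroup ι I) (v : ι → R) :
    Ideal.Quotient.mk I ∘ (v ᵥ* g.1) = Ideal.Quotient.mk I ∘ v := by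
  ext i
  simp only [Function.comp_apply, RingHom.map_vecMul, map_mk_of_mem hg, vecMul_one]

namespace DualPair

variable {A : Finset ι}

instance : MulAction (principalCongruenceSubgroup ι I) (DualPair I A) where
  smul g x :=
    { index := x.index
      vec := g.1.1 *ᵥ x.vec
      covec := x.covec ᵥ* (g⁻¹).1.1
      vec_congr := by rw [mk_comp_mulVec g.2, x.vec_congr]
      covec_congr := by rw [mk_comp_vecMul (g⁻¹).2, x.covec_congr]
      covec_dotProduct_vec := by
        rw [← dotProduct_mulVec, mulVec_mulVec, Subgroup.coe_inv, Units.inv_mul, one_mulVec,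
          x.covec_dotProduct_vec] }
  one_smul x := DualPair.ext rfl (one_mulVec _) (by
    change x.covec ᵥ* ((1⁻¹ : GL ι R)).1 = _
    rw [inv_one, Units.val_one, vecMul_one])
  mul_smul g h x := DualPair.ext rfl (mulVec_mulVec _ _ _).symm (by
    change x.covec ᵥ* ((g.1 * h.1)⁻¹ : GL ι R).1 = (x.covec ᵥ* (h.1⁻¹).1) ᵥ* (g.1⁻¹).1
    rw [vecMul_vecMul, _root_.mul_inv_rev, Units.val_mul])

variable (g : principalCongruenceSubgroup ι I) (x y : DualPair I A)

@[simp] lemma smul_index : (g • x).index = x.index := rfl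

@[simp] lemma smul_vec : (g • x).vec = g.1.1 *ᵥ x.vec := rfl

@[simp] lemma smul_covec : (g • x).covec = x.covec ᵥ* (g.1⁻¹).1 := rfl

lemma smul_covec_dotProduct_smul_vec : (g • x).covec ⬝ᵥ (g • y).vec = x.covec ⬝ᵥ y.vec := by
  rw [smul_vec, smul_covec, ← dotProduct_mulVec, mulVec_mulVec, Units.inv_mul, one_mulVec]

variable {x y} in
lemma Adj.smul (h : x.Adj y) : (g • x).Adj (g • y) := by
  rcases h with rfl | h
  · exact Or.inl rfl
  · refine Or.inr ⟨h.1, ?_⟩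
    simpa only [smul_covec_dotProduct_smul_vec] using h.2

variable (I) in
/-- The stabilizer in the principal congruence subgroup of a standard basis vector and its dual. -/
abbrev stdStabilizer (s : A) : Subgroup (principalCongruenceSubgroup ι I) :=
  MulAction.stabilizer _ (std s : DualPair I A)

lemma mem_stdStabilizer {g : principalCongruenceSubgroup ι I} {s : A} : g ∈ stdStabilizer I s ↔
    g.1.1 *ᵥ Pi.single s.1 1 = Pi.single s.1 1 ∧ Pi.single s.1 1 ᵥ* g.1.1 = Pi.single s.1 1 := by
  rw [MulAction.mem_stabilizer_iff, DualPair.ext_iff]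
  simp only [smul_index, smul_vec, smul_covec, std, true_and]
  refine and_congr_right fun _ => ⟨fun h => ?_, fun h => ?_⟩
  · conv_lhs => rw [← h]
    rw [vecMul_vecMul, Units.inv_mul, vecMul_one]
  · conv_lhs => rw [← h]
    rw [vecMul_vecMul, Units.mul_inv, vecMul_one]

lemma transvection_mem_stdStabilizer {u ξ : ι → R} {h : ξ ⬝ᵥ u = 0}
    (hI : transvection u ξ h ∈ principalCongruenceSubgroup ι I) {t : A} (hu : u t = 0)
    (hξ : ξ t = 0) : ⟨transvection u ξ h, hI⟩ ∈ stdStabilizer I t := by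
  rw [mem_stdStabilizer, transvection_mulVec, vecMul_transvection]
  simp [hu, hξ]

end DualPair

omit [DecidableEq ι] in
lemma exists_dotProduct_eq_one_dotProduct_eq_one [IsDedekindDomain R] {T : Finset ι} (s : ι)
    (hcard : 2 * T.card + 3 < Fintype.card ι) {v φ : ι → R} (hφT : ∀ t ∈ T, φ t = 0)
    (hφv : φ ⬝ᵥ v = 1) : ∃ ξ y : ι → R, ξ ⬝ᵥ v = 1 ∧ ξ ⬝ᵥ y = 1 ∧ (∀ t ∈ T, ξ t = 0) ∧
      y s = 0 ∧ ∀ t ∈ T, y t = 0 := by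
  classical
  obtain ⟨β, hβ, y, hy, hξy⟩ := exists_add_dotProduct_eq_one
    (Φ := (insert s T).toList.map (Pi.single · 1)) (Ψ := v :: T.toList.map (Pi.single · 1)) (by
      have := Finset.card_insert_le s T
      simp only [List.length_map, Finset.length_toList, List.length_cons]
      omega) φ
  simp only [mem_commonKernel, List.forall_mem_cons, List.forall_mem_map, Finset.mem_toList,
    Finset.forall_mem_insert, single_one_dotProduct] at hβ hy
  refine ⟨φ + β, y, ?_, hξy, fun t ht => ?_, hy⟩
  · rw [add_dotProduct, hφv, dotProduct_comm, hβ.1, add_zero]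
  · rw [Pi.add_apply, hφT t ht, hβ.2 t ht, add_zero]

open DualPair

variable {A : Finset ι}

-- A transvection along `ξ` carries `v + y` to `v`, and one along the `s`-th coordinate carries
-- the `s`-th basis vector to `v + y`, where `y` is chosen in the kernel of `ξ` so that the `s`-th
-- coordinate of `v + y` is `1`.
lemma exists_mulVec_single_eq [IsDedekindDomain R] {T : Finset A} {s : A} (hs : s ∉ T)
    (hcard : 2 * T.card + 3 < Fintype.card ι) {v φ : ι → R} (hvT : ∀ t ∈ T, v t = 0)
    (hφT : ∀ t ∈ T, φ t = 0) (hv : Ideal.Quotient.mk I ∘ v = Pi.single s.1 1) (hφv : φ ⬝ᵥ v = 1) :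
    ∃ g : principalCongruenceSubgroup ι I, (∀ t ∈ T, g ∈ stdStabilizer I t) ∧
      g.1.1 *ᵥ Pi.single s.1 1 = v := by
  obtain ⟨ξ, y', hξv, hξy', hξT, hys', hyT'⟩ := exists_dotProduct_eq_one_dotProduct_eq_one
    (T := T.map (Function.Embedding.subtype _)) s.1 (by simpa using hcard)
    (by simpa using hφT) hφv
  have hvI (i : ι) : v i - (Pi.single s.1 1 : ι → R) i ∈ I := by
    rw [← Ideal.Quotient.eq, ← Function.comp_apply (f := Ideal.Quotient.mk I), hv,
      ← map_comp_single_one (Ideal.Quotient.mk I), Function.comp_apply]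
  have hvs : 1 - v s ∈ I := by simpa using I.neg_mem (hvI s)
  have hne (t : A) (ht : t ∈ T) : t.1 ≠ s.1 := fun h => hs (Subtype.ext h ▸ ht)
  let y : ι → R := (1 - v s) • Pi.single s.1 1 - ((1 - v s) * ξ s) • y'
  have hyI (i : ι) : y i ∈ I :=
    I.sub_mem (I.mul_mem_right _ hvs) (I.mul_mem_right _ (I.mul_mem_right _ hvs))
  have hξy : ξ ⬝ᵥ y = 0 := by simp [y, hξy']
  have hys : y s = 1 - v s := by simp [y, hys']
  have hyT (t : A) (ht : t ∈ T) : y t = 0 := by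
    simp [y, hne t ht, hyT' t.1 (by simpa using ht)]
  have h₁ : ξ ⬝ᵥ (-y) = 0 := by rw [dotProduct_neg, hξy, neg_zero]
  have h₂ : Pi.single s.1 1 ⬝ᵥ (v + y - Pi.single s.1 1) = 0 := by simp [hys]
  have hI₁ : transvection (-y) ξ h₁ ∈ principalCongruenceSubgroup ι I :=
    transvection_mem _ fun i j => I.mul_mem_right _ (I.neg_mem (hyI i))
  have hI₂ : transvection (v + y - Pi.single s.1 1) (Pi.single s.1 1) h₂ ∈
      principalCongruenceSubgroup ι I := transvection_mem _ fun i j => I.mul_mem_right _ <| by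
    simpa [add_sub_right_comm] using I.add_mem (hvI i) (hyI i)
  refine ⟨⟨_, hI₁⟩ * ⟨_, hI₂⟩, fun t ht => mul_mem ?_ ?_, ?_⟩
  · exact transvection_mem_stdStabilizer _ (by simp [hyT t ht]) (hξT t.1 (by simpa using ht))
  · exact transvection_mem_stdStabilizer _ (by simp [hvT t ht, hyT t ht, hne t ht])
      (by simp [hne t ht])
  · rw [Subgroup.coe_mul, Units.val_mul, ← mulVec_mulVec, transvection_mulVec, transvection_mulVec]
    simp [hξy, hξv]

lemma exists_smul_std_eq_of_vec_eq {x : DualPair I A} (hx : x.vec = Pi.single x.index.1 1) :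
    ∃ g : principalCongruenceSubgroup ι I, g • std x.index = x ∧
      ∀ t ≠ x.index, x.covec t = 0 → g ∈ stdStabilizer I t := by
  have hxs : x.covec x.index = 1 := by
    simpa [hx] using x.covec_dotProduct_vec
  have h : (Pi.single x.index.1 1 - x.covec) ⬝ᵥ Pi.single x.index.1 1 = 0 := by simp [hxs]
  have hI : transvection (Pi.single x.index.1 1) _ h ∈ principalCongruenceSubgroup ι I :=
    transvection_mem _ fun i j => I.mul_mem_left _ <| by
      rw [Pi.sub_apply, ← Ideal.Quotient.eq, ← Function.comp_apply (f := Ideal.Quotient.mk I),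
        map_comp_single_one, ← x.covec_congr, Function.comp_apply]
  refine ⟨⟨_, hI⟩, DualPair.ext rfl ?_ ?_, fun t ht hxt => ?_⟩
  · rw [smul_vec, std, transvection_mulVec]
    simp [hx, hxs]
  · rw [smul_covec, std, vecMul_transvection_inv]
    simp
  · have hne : t.1 ≠ x.index.1 := fun h => ht (Subtype.ext h)
    exact transvection_mem_stdStabilizer _ (by simp [hne]) (by simp [hne, hxt])

lemma exists_smul_std_eq [IsDedekindDomain R] {T : Finset A} {x : DualPair I A}
    (hcard : 2 * T.card + 3 < Fintype.card ι) (hxT : x.index ∉ T)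
    (hadj : ∀ t ∈ T, x.Adj (std t)) :
    ∃ g : principalCongruenceSubgroup ι I, g • std x.index = x ∧
      ∀ t ∈ T, g ∈ stdStabilizer I t := by
  have hzero (y : DualPair I A) (hy : y.index ∉ T) (hadj : ∀ t ∈ T, y.Adj (std t)) (t : A)
      (ht : t ∈ T) : t ≠ y.index ∧ y.covec t = 0 ∧ y.vec t = 0 := by
    rcases hadj t ht with rfl | h
    · exact absurd ht hy
    · simpa [std, eq_comm] using h
  obtain ⟨g, hgT, hgx⟩ :=
    exists_mulVec_single_eq hxT hcard (fun t ht => (hzero x hxT hadj t ht).2.2)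
      (fun t ht => (hzero x hxT hadj t ht).2.1) x.vec_congr x.covec_dotProduct_vec
  have hvec : (g⁻¹ • x).vec = Pi.single x.index.1 1 := by
    rw [smul_vec, ← hgx, mulVec_mulVec, Subgroup.coe_inv, Units.inv_mul, one_mulVec]
  obtain ⟨g', hg', hg'T⟩ := exists_smul_std_eq_of_vec_eq hvec
  have hadj' (t : A) (ht : t ∈ T) : (g⁻¹ • x).Adj (std t) := by
    rw [← MulAction.mem_stabilizer_iff.1 (inv_mem (hgT t ht))]
    exact (hadj t ht).smul g⁻¹
  refine ⟨g * g', by rw [mul_smul, ← eq_inv_smul_iff]; exact hg', fun t ht => mul_mem (hgT t ht) ?_⟩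
  obtain ⟨hne, hcov, -⟩ := hzero (g⁻¹ • x) hxT hadj' t ht
  exact hg'T t hne hcov

theorem exists_forall_smul_std_eq [IsDedekindDomain R] {l : List (DualPair I A)}
    (hl : IsClique Adj l) (hcard : 2 * l.length + 3 < Fintype.card ι) :
    ∃ g : principalCongruenceSubgroup ι I, ∀ x ∈ l, g • std x.index = x := by
  induction l with
  | nil => exact ⟨1, by simp⟩
  | cons x l ih =>
    rw [List.length_cons] at hcard
    obtain ⟨g, hg⟩ := ih (fun a ha b hb => hl a (.tail x ha) b (.tail x hb)) (by omega)
    by_cases hx : x ∈ l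
    · exact ⟨g, List.forall_mem_cons.2 ⟨hg x hx, hg⟩⟩
    have hinv (y : DualPair I A) (hy : y ∈ l) : g⁻¹ • y = std y.index := by
      rw [inv_smul_eq_iff, hg y hy]
    have hcard' : 2 * (l.map index).toFinset.card + 3 < Fintype.card ι := by
      have := List.toFinset_card_le (l.map index)
      rw [List.length_map] at this
      omega
    have hfresh : (g⁻¹ • x).index ∉ (l.map index).toFinset := fun h => by
      obtain ⟨y, hy, hyx⟩ := List.mem_map.1 (List.mem_toFinset.1 h)
      exact hx (isColoredGraph_adj.eq_of_color_eq (hl x (.head l) y (.tail x hy)) hyx.symm ▸ hy)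
    have hadj (t : A) (ht : t ∈ (l.map index).toFinset) : (g⁻¹ • x).Adj (std t) := by
      obtain ⟨y, hy, rfl⟩ := List.mem_map.1 (List.mem_toFinset.1 ht)
      exact hinv y hy ▸ (hl x (.head l) y (.tail x hy)).smul g⁻¹
    obtain ⟨g', hg'x, hg'⟩ := exists_smul_std_eq hcard' hfresh hadj
    refine ⟨g * g', List.forall_mem_cons.2 ⟨?_, fun y hy => ?_⟩⟩
    · rw [mul_smul, ← eq_inv_smul_iff]
      exact hg'x
    · have hgy := hg' y.index (List.mem_toFinset.2 (List.mem_map_of_mem hy))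
      rw [mul_smul, MulAction.mem_stabilizer_iff.1 hgy, hg y hy]

lemma isAcyclicBelow_inCoset_stdStabilizer (k : Type*) [CommRing k] [IsDedekindDomain R]
    (hI : I ≠ ⊤) {c : ℕ} (hA : 4 * c + 4 ≤ A.card) :
    IsAcyclicBelow k (InCoset fun s : A => stdStabilizer I s) c := by
  have hAι : A.card ≤ Fintype.card ι := Finset.card_le_univ A
  have hclique : IsAcyclicBelow k (IsClique (Adj (I := I) (A := A))) c :=
    (isAcyclicBelow_isClique_joined k (F := []) (Q := 2 * c)
      (fun F hF hFQ => exists_injective_forall_adj hI (by omega) hF hFQ) isColoredGraph_adj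
      (by simp) (by simp)).congr k fun l => by simp [IsJoined]
  refine (isAcyclicBelow_exists_vertex_eq k isColoredGraph_adj
    (vert := fun (g : principalCongruenceSubgroup ι I) s => g • std s) (fun _ _ => rfl)
    (fun g s t => (adj_std_std s t).smul g) hclique
    fun l hl hlc => exists_forall_smul_std_eq hl (by omega)).congr k fun l => ?_
  refine exists_congr fun s => forall₂_congr fun g _ => forall₂_congr fun h _ => ?_
  rw [MulAction.mem_stabilizer_iff, mul_smul, inv_smul_eq_iff, eq_comm]

end PrincipalCongruenceSubgroup

section SubquotientLength

variable {k : Type*} [CommRing k] {M M' : Type*} [AddCommGroup M] [Module k M]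
  [AddCommGroup M'] [Module k M']

/-- The length of the subquotient `Z / (Z ⊓ B)`; over a field this is its dimension. -/
noncomputable def subquotientLength (Z B : Submodule k M) : ℕ∞ :=
  Module.length k (Z ⧸ B.submoduleOf Z)

lemma toNat_length (F V : Type*) [DivisionRing F] [AddCommGroup V] [Module F V] :
    (Module.length F V).toNat = Module.finrank F V := by
  simp [Module.length_eq_rank, Module.finrank]

lemma subquotientLength_eq_zero {Z B : Submodule k M} (h : Z ≤ B) : subquotientLength Z B = 0 :=
  Module.length_eq_zero_iff.2 <| Submodule.Quotient.subsingleton_iff.2 <|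
    Submodule.submoduleOf_eq_top.2 h

/-- The map of subquotients `Z / (Z ⊓ B) → Z' / (Z' ⊓ B')` induced by a linear map. -/
def subquotientMap (f : M →ₗ[k] M') {Z B : Submodule k M} {Z' B' : Submodule k M'}
    (hZ : Z ≤ Z'.comap f) (hB : Z ⊓ B ≤ B'.comap f) :
    (Z ⧸ B.submoduleOf Z) →ₗ[k] Z' ⧸ B'.submoduleOf Z' :=
  Submodule.mapQ _ _ (f.restrict hZ) fun z hz => hB ⟨z.2, hz⟩

variable {f : M →ₗ[k] M'} {Z B : Submodule k M} {Z' B' : Submodule k M'}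
  (hZ : Z ≤ Z'.comap f) (hB : Z ⊓ B ≤ B'.comap f)

lemma subquotientMap_mk_eq_zero (z : Z) :
    subquotientMap f hZ hB (Submodule.Quotient.mk z) = 0 ↔ f z ∈ B' :=
  Submodule.Quotient.mk_eq_zero (B'.submoduleOf Z')

lemma subquotientMap_injective (h : Z ⊓ B'.comap f ≤ B) :
    Function.Injective (subquotientMap f hZ hB) := by
  refine (injective_iff_map_eq_zero _).2 fun x => ?_
  obtain ⟨z, rfl⟩ := Submodule.Quotient.mk_surjective _ x
  exact fun hz => (Submodule.Quotient.mk_eq_zero _).2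
    (h ⟨z.2, (subquotientMap_mk_eq_zero hZ hB z).1 hz⟩)

lemma subquotientMap_surjective (h : Z' ≤ Z.map f ⊔ B') :
    Function.Surjective (subquotientMap f hZ hB) := by
  intro x
  obtain ⟨z', rfl⟩ := Submodule.Quotient.mk_surjective _ x
  obtain ⟨_, ⟨z, hz, rfl⟩, b, hb, hzb⟩ := Submodule.mem_sup.1 (h z'.2)
  refine ⟨Submodule.Quotient.mk ⟨z, hz⟩, (Submodule.Quotient.eq _).2 ?_⟩
  change f z - z' ∈ B'
  rw [← hzb, sub_add_cancel_left]
  exact neg_mem hb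

lemma subquotientLength_congr (f : M →ₗ[k] M') (hZ : Z ≤ Z'.comap f)
    (hB : ∀ z ∈ Z, f z ∈ B' ↔ z ∈ B) (hf : Z' ≤ Z.map f ⊔ B') :
    subquotientLength Z B = subquotientLength Z' B' :=
  (LinearEquiv.ofBijective (subquotientMap f hZ fun z hz => (hB z hz.1).2 hz.2)
    ⟨subquotientMap_injective _ _ fun z hz => (hB z hz.1).1 hz.2,
      subquotientMap_surjective _ _ hf⟩).length_eq

lemma subquotientLength_add {Z₁ Z₂ Z₃ B₁ B₂ B₃ : Submodule k M} (hZ₁₂ : Z₁ ≤ Z₂) (hZ₂₃ : Z₂ ≤ Z₃)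
    (hB₁₂ : B₁ ≤ B₂) (hB₂₃ : B₂ ≤ B₃) (hzero : Z₁ ≤ B₃) (hinj : Z₁ ⊓ B₂ ≤ B₁)
    (hexact : Z₂ ⊓ B₃ ≤ Z₁ ⊔ B₂) (hsurj : Z₃ ≤ Z₂ ⊔ B₃) :
    subquotientLength Z₂ B₂ = subquotientLength Z₁ B₁ + subquotientLength Z₃ B₃ := by
  let f := subquotientMap (B := B₁) (B' := B₂) LinearMap.id hZ₁₂ (inf_le_right.trans hB₁₂)
  let g := subquotientMap (B := B₂) (B' := B₃) LinearMap.id hZ₂₃ (inf_le_right.trans hB₂₃)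
  have hf : Function.Injective f := subquotientMap_injective _ _ hinj
  have hg : Function.Surjective g := subquotientMap_surjective _ _ (by simpa using hsurj)
  refine Module.length_eq_add_of_exact f g hf hg fun x => ⟨fun hx => ?_, ?_⟩
  · obtain ⟨z, rfl⟩ := Submodule.Quotient.mk_surjective _ x
    have hz : z.1 ∈ B₃ := (subquotientMap_mk_eq_zero _ _ z).1 hx
    obtain ⟨z₁, hz₁, b, hb, hzb⟩ := Submodule.mem_sup.1 (hexact ⟨z.2, hz⟩)
    refine ⟨Submodule.Quotient.mk ⟨z₁, hz₁⟩, (Submodule.Quotient.eq _).2 ?_⟩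
    change z₁ - z.1 ∈ B₂
    rw [← hzb, sub_add_cancel_left]
    exact neg_mem hb
  · rintro ⟨y, rfl⟩
    obtain ⟨z, rfl⟩ := Submodule.Quotient.mk_surjective _ y
    exact (Submodule.Quotient.mk_eq_zero (B₃.submoduleOf Z₃)).2 (hzero z.2)

end SubquotientLength

section EventuallyPolynomial

open Filter Polynomial

/-- An extended-natural-number sequence that is eventually constantly `⊤`, or eventually finite and
given by a polynomial with rational coefficients. -/
def IsEventuallyTopOrPolynomial (f : ℕ → ℕ∞) : Prop :=
  (∀ᶠ n in atTop, f n = ⊤) ∨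
    ∃ P : ℚ[X], ∀ᶠ n : ℕ in atTop, ∃ m : ℕ, f n = m ∧ (m : ℚ) = P.eval (n : ℚ)

lemma IsEventuallyTopOrPolynomial.exists_toNat_eq_eval {f : ℕ → ℕ∞}
    (hf : IsEventuallyTopOrPolynomial f) :
    ∃ (P : ℚ[X]) (N : ℕ), ∀ n ≥ N, ((f n).toNat : ℚ) = P.eval (n : ℚ) := by
  simp_rw [← eventually_atTop]
  rcases hf with hf | ⟨P, hP⟩
  · exact ⟨0, hf.mono fun n hn => by simp [hn]⟩
  · refine ⟨P, hP.mono ?_⟩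
    rintro n ⟨m, hm, hmP⟩
    rw [hm, ENat.toNat_natCast, hmP]

lemma exists_polynomial_eval_add_one_sub (P : ℚ[X]) :
    ∃ Q : ℚ[X], ∀ x : ℚ, Q.eval (x + 1) - Q.eval x = P.eval x := by
  induction P using Polynomial.induction_on' with
  | add p q hp hq =>
    obtain ⟨P, hP⟩ := hp
    obtain ⟨Q, hQ⟩ := hq
    refine ⟨P + Q, fun x => ?_⟩
    rw [eval_add, eval_add, eval_add, ← hP, ← hQ]
    ring
  | monomial m a =>
    refine ⟨C (a / (m + 1)) * Polynomial.bernoulli (m + 1), fun x => ?_⟩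
    have hm : (m : ℚ) + 1 ≠ 0 := by positivity
    simp only [eval_mul, eval_C, eval_monomial]
    rw [add_comm x, Polynomial.bernoulli_eval_one_add, Nat.add_sub_cancel]
    push_cast
    field_simp
    ring

lemma eventually_eq_top_of_frequently {f g : ℕ → ℕ∞}
    (hfg : ∀ᶠ n in atTop, f (n + 1) = f n + g (n + 1)) (hf : ∃ᶠ n in atTop, f n = ⊤) :
    ∀ᶠ n in atTop, f n = ⊤ := by
  obtain ⟨N, hN⟩ := eventually_atTop.1 hfg
  obtain ⟨n₀, hn₀, htop⟩ := frequently_atTop.1 hf N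
  refine eventually_atTop.2 ⟨n₀, fun n hn => ?_⟩
  induction n, hn using Nat.le_induction with
  | base => exact htop
  | succ n hn ih => rw [hN n (hn₀.trans hn), ih, top_add]

lemma IsEventuallyTopOrPolynomial.of_recursion {f g : ℕ → ℕ∞}
    (hg : IsEventuallyTopOrPolynomial g)
    (hfg : ∀ᶠ n in atTop, f (n + 1) = f n + g (n + 1)) : IsEventuallyTopOrPolynomial f := by
  by_cases htop : ∃ᶠ n in atTop, f n = ⊤
  · exact .inl (eventually_eq_top_of_frequently hfg htop)
  rcases hg with hg | ⟨P, hP⟩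
  · refine absurd ((tendsto_add_atTop_nat 1).frequently (Eventually.frequently ?_)) htop
    filter_upwards [hfg, (tendsto_add_atTop_nat 1).eventually hg] with n hfn hgn
    rw [hfn, hgn, add_top]
  obtain ⟨Q, hQ⟩ := exists_polynomial_eval_add_one_sub (P.comp (X + 1))
  have hP' := (tendsto_add_atTop_nat 1).eventually hP
  obtain ⟨N, hN⟩ := eventually_atTop.1 (hfg.and (hP'.and (not_frequently.1 htop)))
  obtain ⟨m₀, hm₀⟩ := ENat.ne_top_iff_exists.1 (hN N le_rfl).2.2
  refine .inr ⟨Q + C (m₀ - Q.eval (N : ℚ)), eventually_atTop.2 ⟨N, fun n hn => ?_⟩⟩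
  induction n, hn using Nat.le_induction with
  | base => exact ⟨m₀, hm₀.symm, by simp⟩
  | succ n hn ih =>
    obtain ⟨m, hm, hmQ⟩ := ih
    obtain ⟨hrec, ⟨r, hr, hrP⟩, -⟩ := hN n hn
    refine ⟨m + r, by rw [hrec, hm, hr, Nat.cast_add], ?_⟩
    have hQn := hQ n
    simp only [eval_comp, eval_add, eval_X, eval_one, eval_C] at hQn hmQ ⊢
    push_cast at hrP ⊢
    linear_combination hmQ + hrP - hQn

lemma isEventuallyTopOrPolynomial_of_recursion {D : ℕ → ℕ → ℕ∞} {N m : ℕ}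
    (hrec : ∀ a n, a ≤ n → N ≤ n → D a (n + 1) = D a n + D (a + 1) (n + 1))
    (hzero : ∀ a n, a ≤ n → m ≤ a → D a n = 0) (a : ℕ) : IsEventuallyTopOrPolynomial (D a) := by
  have hlarge (a : ℕ) (ha : m ≤ a) : IsEventuallyTopOrPolynomial (D a) :=
    .inr ⟨0, eventually_atTop.2 ⟨a, fun n hn => ⟨0, hzero a n hn ha, by simp⟩⟩⟩
  rcases le_total m a with ha | ha
  · exact hlarge a ha
  · induction ha using Nat.decreasingInduction with
    | self => exact hlarge m le_rfl
    | of_succ a _ ih =>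
      refine ih.of_recursion (eventually_atTop.2 ⟨max a N, fun n hn => ?_⟩)
      exact hrec a n (le_of_max_le_left hn) (le_of_max_le_right hn)

end EventuallyPolynomial

/-- A complex `(chains j S, d)` of submodules of `M` for each finite set `S ⊆ ℕ` of colours,
increasing in `S`, with a compatible action of the permutations of the colours.
The last field says that the transposition of two colours fixes every chain avoiding both of them.

All degrees live inside the one module `M`, and `d` lowers degrees by one: the truncated subtraction
in `d_mem` is harmless because `d` vanishes in degree `0`. -/
structure SymmetricSystem (k M : Type*) [CommRing k] [AddCommGroup M] [Module k M] where
  chains : ℕ → Finset ℕ → Submodule k M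
  d : M →ₗ[k] M
  d_d : ∀ z, d (d z) = 0
  d_mem : ∀ {j S}, chains j S ≤ (chains (j - 1) S).comap d
  d_eq_zero : ∀ {S z}, z ∈ chains 0 S → d z = 0
  chains_mono : ∀ j, Monotone (chains j)
  chains_inf_sup_le : ∀ j (A S : Finset ℕ) s, chains j (S.erase s) ⊓
    (A.sup fun a => chains j (S.erase a)) ≤ A.sup fun a => chains j ((S.erase s).erase a)
  perm : Representation k (Equiv.Perm ℕ) M
  perm_d : ∀ σ z, perm σ (d z) = d (perm σ z)
  perm_mem : ∀ {j S T} {σ : Equiv.Perm ℕ}, (∀ x ∈ S, σ x ∈ T) →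
    chains j S ≤ (chains j T).comap (perm σ)
  perm_swap : ∀ {j S s u z}, s ∉ S → u ∉ S → z ∈ chains j S → perm (Equiv.swap s u) z = z

namespace SymmetricSystem

variable {k M : Type*} [CommRing k] [AddCommGroup M] [Module k M] (X : SymmetricSystem k M)

/-- The chains on `S` which are sums of chains avoiding some colour of `A`. -/
def faces (j : ℕ) (A S : Finset ℕ) : Submodule k M :=
  A.sup fun a => X.chains j (S.erase a)

/-- The cycles of the complex on `S` relative to the faces of `A`. -/
def relCycles (j : ℕ) (A S : Finset ℕ) : Submodule k M :=
  X.chains j S ⊓ (X.faces (j - 1) A S).comap X.d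

/-- The boundaries of the complex on `S` relative to the faces of `A`. -/
def relBoundaries (j : ℕ) (A S : Finset ℕ) : Submodule k M :=
  (X.chains (j + 1) S).map X.d ⊔ X.faces j A S

variable {X} {j : ℕ} {A B S T : Finset ℕ} {s : ℕ}

lemma mem_relBoundaries {z : M} : z ∈ X.relBoundaries j A S ↔
    ∃ y ∈ X.chains (j + 1) S, ∃ p ∈ X.faces j A S, X.d y + p = z := by
  simp [relBoundaries, Submodule.mem_sup]

lemma faces_insert : X.faces j (insert s A) S = X.chains j (S.erase s) ⊔ X.faces j A S :=
  Finset.sup_insert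

lemma chains_erase_le_faces (h : s ∈ A) : X.chains j (S.erase s) ≤ X.faces j A S :=
  Finset.le_sup (f := fun a => X.chains j (S.erase a)) h

lemma faces_le_chains : X.faces j A S ≤ X.chains j S :=
  Finset.sup_le fun a _ => X.chains_mono j (Finset.erase_subset a S)

lemma faces_mono (hA : A ⊆ B) (hS : S ⊆ T) : X.faces j A S ≤ X.faces j B T :=
  Finset.sup_le fun _ ha =>
    (X.chains_mono j (Finset.erase_subset_erase _ hS)).trans (chains_erase_le_faces (hA ha))

lemma d_mem_faces : X.faces j A S ≤ (X.faces (j - 1) A S).comap X.d :=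
  Finset.sup_le fun _ ha => X.d_mem.trans (Submodule.comap_mono (chains_erase_le_faces ha))

lemma relCycles_mono (hA : A ⊆ B) (hS : S ⊆ T) : X.relCycles j A S ≤ X.relCycles j B T :=
  inf_le_inf (X.chains_mono j hS) (Submodule.comap_mono (faces_mono hA hS))

lemma relBoundaries_mono (hA : A ⊆ B) (hS : S ⊆ T) :
    X.relBoundaries j A S ≤ X.relBoundaries j B T :=
  sup_le_sup (Submodule.map_mono (X.chains_mono _ hS)) (faces_mono hA hS)

lemma faces_le_relBoundaries : X.faces j A S ≤ X.relBoundaries j A S :=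
  le_sup_right

lemma d_mem_relBoundaries : X.chains (j + 1) S ≤ (X.relBoundaries j A S).comap X.d :=
  Submodule.map_le_iff_le_comap.1 le_sup_left

lemma relBoundaries_le_chains : X.relBoundaries j A S ≤ X.chains j S :=
  sup_le (Submodule.map_le_iff_le_comap.2 X.d_mem) faces_le_chains

lemma relCycles_erase_le_relBoundaries_insert :
    X.relCycles j A (S.erase s) ≤ X.relBoundaries j (insert s A) S :=
  inf_le_left.trans <| (chains_erase_le_faces (Finset.mem_insert_self _ _)).trans
    faces_le_relBoundaries

lemma mem_relCycles_erase {z : M} (hz : z ∈ X.chains j (S.erase s))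
    (hdz : X.d z ∈ X.faces (j - 1) A S) : z ∈ X.relCycles j A (S.erase s) :=
  ⟨hz, X.chains_inf_sup_le _ A S s ⟨X.d_mem hz, hdz⟩⟩

lemma relCycles_inf_relBoundaries_insert_le :
    X.relCycles j A S ⊓ X.relBoundaries j (insert s A) S ≤
      X.relCycles j A (S.erase s) ⊔ X.relBoundaries j A S := by
  rintro z ⟨hz, hzB⟩
  obtain ⟨y, hy, _, hqp, rfl⟩ := mem_relBoundaries.1 hzB
  rw [faces_insert] at hqp
  obtain ⟨q, hq, p, hp, rfl⟩ := Submodule.mem_sup.1 hqp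
  have hdq : X.d q ∈ X.faces (j - 1) A S := by
    have h : X.d (X.d y + (q + p)) - X.d p ∈ X.faces (j - 1) A S :=
      sub_mem hz.2 (d_mem_faces hp)
    rwa [map_add, map_add, X.d_d, zero_add, add_sub_cancel_right] at h
  rw [add_left_comm]
  exact Submodule.add_mem_sup (mem_relCycles_erase hq hdq)
    (add_mem (d_mem_relBoundaries hy) (faces_le_relBoundaries hp))

variable (X) in
/-- Enlarging `S.erase s` to `S` is injective on homology relative to the faces of `A`. -/
def IsHomologyInjective (j : ℕ) (A S : Finset ℕ) (s : ℕ) : Prop :=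
  X.relCycles j A (S.erase s) ⊓ X.relBoundaries j A S ≤ X.relBoundaries j A (S.erase s)

variable (X) in
/-- Enlarging `A` to `insert s A` is surjective on the relative homology of `S`. -/
def IsHomologySurjective (j : ℕ) (A S : Finset ℕ) (s : ℕ) : Prop :=
  X.relCycles j (insert s A) S ≤ X.relCycles j A S ⊔ X.relBoundaries j (insert s A) S

lemma isHomologySurjective_zero : X.IsHomologySurjective 0 A S s :=
  fun z hz => Submodule.mem_sup_left ⟨hz.1, by simp [X.d_eq_zero hz.1]⟩

lemma IsHomologyInjective.isHomologySurjective_succ (h : X.IsHomologyInjective j A S s) :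
    X.IsHomologySurjective (j + 1) A S s := by
  rintro z ⟨hz, hdz⟩
  rw [SetLike.mem_coe, Submodule.mem_comap, Nat.add_sub_cancel, faces_insert] at hdz
  obtain ⟨x, hx, w, hw, hxw⟩ := Submodule.mem_sup.1 hdz
  have hdx : X.d x ∈ X.faces (j - 1) A S := by
    have hxw' := congrArg X.d hxw
    rw [map_add, X.d_d] at hxw'
    rw [eq_neg_of_add_eq_zero_left hxw']
    exact neg_mem (d_mem_faces hw)
  have hxB : x ∈ X.relBoundaries j A S := by
    rw [eq_sub_of_add_eq hxw]
    exact sub_mem (d_mem_relBoundaries hz) (faces_le_relBoundaries hw)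
  obtain ⟨y, hy, p, hp, rfl⟩ := mem_relBoundaries.1 (h ⟨mem_relCycles_erase hx hdx, hxB⟩)
  have hzy : z - y ∈ X.relCycles (j + 1) A S := by
    refine ⟨sub_mem hz (X.chains_mono _ (Finset.erase_subset _ _) hy), ?_⟩
    rw [SetLike.mem_coe, Submodule.mem_comap, map_sub, ← hxw, add_assoc, add_sub_cancel_left]
    exact add_mem (faces_mono subset_rfl (Finset.erase_subset _ _) hp) hw
  rw [← sub_add_cancel z y]
  exact Submodule.add_mem_sup hzy
    (faces_le_relBoundaries (chains_erase_le_faces (Finset.mem_insert_self _ _) hy))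

lemma relCycles_inf_relBoundaries_le (hBT : B ⊆ T)
    (hsurj : ∀ B', B ⊆ B' → B' ⊆ T → ∀ u ∈ T \ B', ∀ v ∈ T \ B', u ≠ v →
      X.IsHomologySurjective j B' (S.erase v) u) :
    X.relCycles j B S ⊓ X.relBoundaries j T S ≤
      ((T \ B).sup fun v => X.relCycles j B (S.erase v)) ⊔ X.relBoundaries j B S := by
  induction hn : (T \ B).card generalizing B with
  | zero =>
    obtain rfl : B = T :=
      hBT.antisymm (Finset.sdiff_eq_empty_iff_subset.1 (Finset.card_eq_zero.1 hn))
    exact inf_le_right.trans le_sup_right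
  | succ n ih =>
    obtain ⟨u, hu⟩ := Finset.card_pos.1 (n.succ_pos.trans_eq hn.symm)
    have hcard : (T \ insert u B).card = n := by
      rw [Finset.sdiff_insert, Finset.card_erase_of_mem hu, hn, Nat.add_sub_cancel]
    set E := (T \ B).sup fun v => X.relCycles j B (S.erase v)
    have hE : E ≤ X.relCycles j B S :=
      Finset.sup_le fun v _ => relCycles_mono subset_rfl (Finset.erase_subset _ _)
    have hlift : ((T \ insert u B).sup fun v => X.relCycles j (insert u B) (S.erase v)) ≤
        E ⊔ X.relBoundaries j (insert u B) S := by
      refine Finset.sup_le fun v hv => ?_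
      have hvB : v ∈ T \ B := Finset.sdiff_subset_sdiff subset_rfl (Finset.subset_insert _ _) hv
      have huv : u ≠ v := fun h => (Finset.mem_sdiff.1 hv).2 (by simp [h])
      exact (hsurj B subset_rfl hBT u hu v hvB huv).trans <| sup_le_sup
        (Finset.le_sup (f := fun v => X.relCycles j B (S.erase v)) hvB)
        (relBoundaries_mono subset_rfl (Finset.erase_subset _ _))
    calc X.relCycles j B S ⊓ X.relBoundaries j T S
        ≤ (X.relCycles j (insert u B) S ⊓ X.relBoundaries j T S) ⊓ X.relCycles j B S :=
          le_inf (inf_le_inf_right _ (relCycles_mono (Finset.subset_insert _ _) subset_rfl))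
            inf_le_left
      _ ≤ (E ⊔ X.relBoundaries j (insert u B) S) ⊓ X.relCycles j B S :=
          inf_le_inf_right _ <| (ih (Finset.insert_subset (Finset.mem_sdiff.1 hu).1 hBT)
            (fun B' hB' => hsurj B' ((Finset.subset_insert _ _).trans hB')) hcard).trans <|
              sup_le hlift le_sup_right
      _ = E ⊔ X.relBoundaries j (insert u B) S ⊓ X.relCycles j B S := sup_inf_assoc_of_le _ hE
      _ ≤ E ⊔ X.relBoundaries j B S := by
          refine sup_le le_sup_left ?_
          rw [inf_comm]
          exact relCycles_inf_relBoundaries_insert_le.trans <| sup_le_sup_right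
            (Finset.le_sup (f := fun v => X.relCycles j B (S.erase v)) hu) _

lemma perm_mem_faces {σ : Equiv.Perm ℕ} (hA : ∀ x ∈ A, σ x ∈ B) (hS : ∀ x ∈ S, σ x ∈ T) :
    X.faces j A S ≤ (X.faces j B T).comap (X.perm σ) := by
  refine Finset.sup_le fun a ha => (X.perm_mem fun x hx => ?_).trans
    (Submodule.comap_mono (chains_erase_le_faces (hA a ha)))
  obtain ⟨hxa, hx⟩ := Finset.mem_erase.1 hx
  exact Finset.mem_erase.2 ⟨σ.injective.ne hxa, hS x hx⟩

lemma perm_mem_relBoundaries {σ : Equiv.Perm ℕ} (hA : ∀ x ∈ A, σ x ∈ B) (hS : ∀ x ∈ S, σ x ∈ T) :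
    X.relBoundaries j A S ≤ (X.relBoundaries j B T).comap (X.perm σ) := by
  intro z hz
  obtain ⟨y, hy, p, hp, rfl⟩ := mem_relBoundaries.1 hz
  rw [Submodule.mem_comap, map_add, X.perm_d]
  exact add_mem (d_mem_relBoundaries (X.perm_mem hS hy))
    (faces_le_relBoundaries (perm_mem_faces hA hS hp))

lemma perm_mem_relCycles {σ : Equiv.Perm ℕ} (hA : ∀ x ∈ A, σ x ∈ B) (hS : ∀ x ∈ S, σ x ∈ T) :
    X.relCycles j A S ≤ (X.relCycles j B T).comap (X.perm σ) := by
  rintro z ⟨hz, hdz⟩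
  refine ⟨X.perm_mem hS hz, ?_⟩
  rw [SetLike.mem_coe, Submodule.mem_comap, ← X.perm_d]
  exact perm_mem_faces hA hS hdz

-- The part of `d y` avoiding `u` is fixed by the transposition `(s u)`, which turns `y` into a
-- chain avoiding `s`.
lemma d_relCycles_erase_le {u : ℕ} (hu : u ∈ S) (hsA : s ∉ A) (huA : u ∉ insert s A) :
    X.relCycles (j + 1) (insert s A) (S.erase u) ≤
      (X.relBoundaries j A (S.erase s) ⊔ X.faces j A S).comap X.d := by
  rintro y ⟨hy, hdy⟩
  rw [Finset.mem_insert, not_or] at huA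
  rw [SetLike.mem_coe, Submodule.mem_comap, Nat.add_sub_cancel, faces_insert] at hdy
  obtain ⟨z, hz, p, hp, hzp⟩ := Submodule.mem_sup.1 hdy
  have hswapS (x : ℕ) (hx : x ∈ S.erase u) : Equiv.swap s u x ∈ S.erase s := by
    rw [Finset.mem_erase] at hx ⊢
    rw [Equiv.swap_apply_def]
    grind
  have hswapA (x : ℕ) (hx : x ∈ A) : Equiv.swap s u x ∈ A := by
    rwa [Equiv.swap_apply_of_ne_of_ne (ne_of_mem_of_not_mem hx hsA)
      (ne_of_mem_of_not_mem hx huA.2)]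
  have hzfix : X.perm (Equiv.swap s u) z = z := X.perm_swap (by simp) (by simp) hz
  rw [Submodule.mem_comap, ← hzp]
  refine Submodule.add_mem_sup ?_ (faces_mono subset_rfl (Finset.erase_subset _ _) hp)
  rw [← hzfix, eq_sub_of_add_eq hzp, map_sub, X.perm_d]
  exact sub_mem (d_mem_relBoundaries (X.perm_mem hswapS hy))
    (faces_le_relBoundaries (perm_mem_faces hswapA hswapS hp))

lemma d_relBoundaries_insert_le :
    X.relBoundaries (j + 1) (insert s A) S ≤
      (X.relBoundaries j A (S.erase s) ⊔ X.faces j A S).comap X.d := by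
  intro w hw
  obtain ⟨y, -, p, hp, rfl⟩ := mem_relBoundaries.1 hw
  rw [faces_insert] at hp
  obtain ⟨q, hq, r, hr, rfl⟩ := Submodule.mem_sup.1 hp
  rw [Submodule.mem_comap, map_add, X.d_d, zero_add, map_add]
  exact Submodule.add_mem_sup (d_mem_relBoundaries hq) (d_mem_faces hr)

lemma isHomologyInjective_of_le (hsA : s ∉ A)
    (h : X.relCycles (j + 1) (insert s A) S ≤
      ((S \ insert s A).sup fun u => X.relCycles (j + 1) (insert s A) (S.erase u)) ⊔
        X.relBoundaries (j + 1) (insert s A) S) :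
    X.IsHomologyInjective j A S s := by
  rintro z ⟨hz, hzB⟩
  obtain ⟨y, hy, p, hp, rfl⟩ := mem_relBoundaries.1 hzB
  have hyZ : y ∈ X.relCycles (j + 1) (insert s A) S := by
    refine ⟨hy, ?_⟩
    rw [SetLike.mem_coe, Submodule.mem_comap, Nat.add_sub_cancel, faces_insert,
      ← add_sub_cancel_right (X.d y) p]
    exact sub_mem (Submodule.mem_sup_left hz.1) (Submodule.mem_sup_right hp)
  have hdy : X.d y ∈ X.relBoundaries j A (S.erase s) ⊔ X.faces j A S := by
    refine (h.trans (sup_le (Finset.sup_le fun u hu => ?_) d_relBoundaries_insert_le)) hyZ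
    rw [Finset.mem_sdiff] at hu
    exact d_relCycles_erase_le hu.1 hsA hu.2
  have hmem := add_mem hdy (Submodule.mem_sup_right hp)
  have hmodular := sup_inf_assoc_of_le (X.faces j A S)
    (relBoundaries_le_chains (X := X) (j := j) (A := A) (S := S.erase s))
  refine (hmodular.le.trans (sup_le le_rfl ?_)) ⟨hmem, hz.1⟩
  rw [inf_comm]
  exact (X.chains_inf_sup_le j A S s).trans faces_le_relBoundaries

variable (X) in
/-- The degree-`j` homology relative to the faces of `A` vanishes for every `A` with at least `m`
elements. -/
def VanishesFrom (j m : ℕ) : Prop :=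
  ∀ A S : Finset ℕ, A ⊆ S → m ≤ A.card → X.relCycles j A S ≤ X.relBoundaries j A S

variable {m : ℕ}

lemma VanishesFrom.isHomologyInjective_of_le_card_add (hX : X.VanishesFrom (j + 1) m) (t : ℕ)
    (hAS : A ⊆ S) (hs : s ∈ S) (hsA : s ∉ A) (hA : m ≤ A.card + 1 + t) (hS : m + t ≤ S.card) :
    X.IsHomologyInjective j A S s := by
  induction t generalizing A S s with
  | zero =>
    refine isHomologyInjective_of_le hsA
      (le_sup_of_le_right (hX _ _ (Finset.insert_subset hs hAS) ?_))
    rwa [Finset.card_insert_of_notMem hsA]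
  | succ t ih =>
    have hsAS := Finset.insert_subset hs hAS
    have hS' : X.relCycles (j + 1) (insert s A) S ≤ X.relBoundaries (j + 1) S S :=
      (relCycles_mono hsAS subset_rfl).trans (hX S S subset_rfl (by omega))
    refine isHomologyInjective_of_le hsA <| (le_inf le_rfl hS').trans <|
      relCycles_inf_relBoundaries_le hsAS fun B hB hBS u hu v hv huv => ?_
    rw [Finset.mem_sdiff] at hu hv
    have hcard := Finset.card_le_card hB
    rw [Finset.card_insert_of_notMem hsA] at hcard
    refine (ih (Finset.subset_erase.2 ⟨hBS, hv.2⟩) ?_ hu.2 (by omega) ?_).isHomologySurjective_succ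
    · exact Finset.mem_erase.2 ⟨huv, hu.1⟩
    · rw [Finset.card_erase_of_mem hv.1]
      omega

lemma VanishesFrom.isHomologyInjective (hX : X.VanishesFrom (j + 1) m) (hAS : A ⊆ S) (hs : s ∈ S)
    (hsA : s ∉ A) (hS : 2 * m ≤ S.card) : X.IsHomologyInjective j A S s :=
  hX.isHomologyInjective_of_le_card_add m hAS hs hsA (by omega) (by omega)

lemma exists_isHomologySurjective (hX : ∀ j, ∃ m, X.VanishesFrom j m) (j : ℕ) :
    ∃ N, ∀ (A S : Finset ℕ) (s : ℕ), A ⊆ S → s ∈ S → s ∉ A → N ≤ S.card →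
      X.IsHomologySurjective j A S s := by
  cases j with
  | zero => exact ⟨0, fun A S s _ _ _ _ => isHomologySurjective_zero⟩
  | succ j =>
    obtain ⟨m, hm⟩ := hX (j + 1)
    exact ⟨2 * m, fun A S s hAS hs hsA hS =>
      (hm.isHomologyInjective hAS hs hsA hS).isHomologySurjective_succ⟩

variable (X) in
/-- The length of the degree-`j` homology of the complex on `S` relative to the faces of `A`. -/
noncomputable def homologyLength (j : ℕ) (A S : Finset ℕ) : ℕ∞ :=
  subquotientLength (X.relCycles j A S) (X.relBoundaries j A S)

lemma homologyLength_eq_of_perm (σ : Equiv.Perm ℕ) (hA : ∀ x, x ∈ A ↔ σ x ∈ B)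
    (hS : ∀ x, x ∈ S ↔ σ x ∈ T) : X.homologyLength j A S = X.homologyLength j B T := by
  have hB (x : ℕ) (hx : x ∈ B) : σ⁻¹ x ∈ A := by simpa [hA] using hx
  have hT (x : ℕ) (hx : x ∈ T) : σ⁻¹ x ∈ S := by simpa [hS] using hx
  refine subquotientLength_congr (X.perm σ)
    (perm_mem_relCycles (fun x => (hA x).1) fun x => (hS x).1)
    (fun z _ => ⟨fun h => ?_, fun h => perm_mem_relBoundaries (fun x => (hA x).1)
      (fun x => (hS x).1) h⟩) fun z hz => Submodule.mem_sup_left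
        ⟨X.perm σ⁻¹ z, perm_mem_relCycles hB hT hz, X.perm.self_inv_apply σ z⟩
  rw [← X.perm.inv_self_apply σ z]
  exact perm_mem_relBoundaries hB hT h

lemma homologyLength_eq_add (hinj : X.IsHomologyInjective j A S s)
    (hsurj : X.IsHomologySurjective j A S s) :
    X.homologyLength j A S =
      X.homologyLength j A (S.erase s) + X.homologyLength j (insert s A) S :=
  subquotientLength_add (relCycles_mono subset_rfl (Finset.erase_subset _ _))
    (relCycles_mono (Finset.subset_insert _ _) subset_rfl)
    (relBoundaries_mono subset_rfl (Finset.erase_subset _ _))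
    (relBoundaries_mono (Finset.subset_insert _ _) subset_rfl)
    relCycles_erase_le_relBoundaries_insert hinj relCycles_inf_relBoundaries_insert_le hsurj

lemma homologyLength_range_add_one {a n : ℕ} (han : a ≤ n)
    (hinj : X.IsHomologyInjective j (Finset.range a) (Finset.range (n + 1)) n)
    (hsurj : X.IsHomologySurjective j (Finset.range a) (Finset.range (n + 1)) n) :
    X.homologyLength j (Finset.range a) (Finset.range (n + 1)) =
      X.homologyLength j (Finset.range a) (Finset.range n) +
        X.homologyLength j (Finset.range (a + 1)) (Finset.range (n + 1)) := by
  rw [homologyLength_eq_add hinj hsurj, Finset.range_add_one (n := n),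
    Finset.erase_insert Finset.notMem_range_self, ← Finset.range_add_one]
  congr 1
  refine homologyLength_eq_of_perm (Equiv.swap a n) (fun x => ?_) fun x => ?_ <;>
    rw [Equiv.swap_apply_def] <;> simp only [Finset.mem_insert, Finset.mem_range] <;> grind

theorem isEventuallyTopOrPolynomial_homologyLength (hX : ∀ j, ∃ m, X.VanishesFrom j m) (j : ℕ) :
    IsEventuallyTopOrPolynomial fun n => X.homologyLength j ∅ (Finset.range n) := by
  obtain ⟨m₁, hm₁⟩ := hX (j + 1)
  obtain ⟨N, hN⟩ := exists_isHomologySurjective hX j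
  obtain ⟨m, hm⟩ := hX j
  refine isEventuallyTopOrPolynomial_of_recursion (N := max (2 * m₁) N) (m := m)
    (D := fun a n => X.homologyLength j (Finset.range a) (Finset.range n)) (fun a n han hn => ?_)
    (fun a n han ha => ?_) 0
  · have hsub := Finset.range_mono (han.trans n.le_succ)
    have hmem := Finset.self_mem_range_succ n
    have hnotMem : n ∉ Finset.range a := by simpa using han
    exact homologyLength_range_add_one han
      (hm₁.isHomologyInjective hsub hmem hnotMem (by rw [Finset.card_range]; omega))
      (hN _ _ _ hsub hmem hnotMem (by rw [Finset.card_range]; omega))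
  · exact subquotientLength_eq_zero (hm _ _ (Finset.range_mono han) (by simpa using ha))

end SymmetricSystem

section Functoriality

variable {k : Type*} [CommRing k] {Γ Γ' : Type*} [Group Γ] [Group Γ']

lemma coinvariants_mapChains (f : Γ →* Γ') (z : List Γ →₀ k) :
    coinvariants k (mapChains k f z) = mapChains k f (coinvariants k z) := by
  induction z using Finsupp.induction_linear with
  | zero => simp
  | add z w hz hw => simp only [map_add, hz, hw]
  | single l a => cases l <;> simp [Function.comp_def]

lemma barDifferential_mapChains (f : Γ →* Γ') (z : List Γ →₀ k) :
    barDifferential k (mapChains k f z) = mapChains k f (barDifferential k z) := by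
  simp only [barDifferential, LinearMap.comp_apply]
  rw [← coinvariants_mapChains, ← boundary_mapChains, mapChains_cone, map_one]

lemma chains_mono {V : Type*} {K K' : List V → Prop} (h : ∀ l, K l → K' l) (p : ℕ) :
    chains k K p ≤ chains k K' p :=
  Finsupp.supported_mono fun l hl => ⟨h l hl.1, hl.2⟩

lemma chains_eq_map_mapChains {V W : Type*} {f : V → W} {K : List V → Prop}
    {K' : List W → Prop} (h : ∀ l', K' l' ↔ ∃ l, K l ∧ l.map f = l') (p : ℕ) :
    chains k K' p = (chains k K p).map (mapChains k f) := by
  refine le_antisymm (fun z hz => ?_) <| Submodule.map_le_iff_le_comap.2 fun z hz =>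
    mapChains_mem_chains (fun l hl => (h _).2 ⟨l, hl, rfl⟩) hz
  refine map_mem_of_mem_supported k (f := LinearMap.id) ?_ hz
  rintro _ ⟨hl', rfl⟩
  obtain ⟨l, hl, rfl⟩ := (h _).1 hl'
  exact ⟨Finsupp.single l 1, by simpa using single_mem_chains hl (1 : k), by simp⟩

lemma coinvariants_mem_chains (H : Subgroup Γ) {p : ℕ} {z : List Γ →₀ k}
    (hz : z ∈ chains k (fun l => ∀ g ∈ l, g ∈ H) (p + 1)) :
    coinvariants k z ∈ chains k (fun l => ∀ g ∈ l, g ∈ H) p := by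
  refine map_mem_of_mem_supported k ?_ hz
  rintro (_ | ⟨g, l⟩) ⟨hH, hl⟩
  · simp at hl
  obtain ⟨hg, hH⟩ := List.forall_mem_cons.1 hH
  rw [coinvariants_single_cons]
  refine Finsupp.single_mem_supported k _ ⟨?_, by simpa using hl⟩
  exact List.forall_mem_map.2 fun h hh => mul_mem (inv_mem hg) (hH h hh)

lemma barDifferential_mem_chains (H : Subgroup Γ) {p : ℕ} {z : List Γ →₀ k}
    (hz : z ∈ chains k (fun l => ∀ g ∈ l, g ∈ H) (p + 1)) :
    barDifferential k z ∈ chains k (fun l => ∀ g ∈ l, g ∈ H) p := by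
  refine coinvariants_mem_chains H
    (boundary_mem_chains (fun _ _ hl h g hg => h g (hl.subset hg)) ?_)
  refine map_mem_of_mem_supported k (f := cone k 1) ?_ hz
  rintro l ⟨hH, hl⟩
  rw [cone_single]
  exact Finsupp.single_mem_supported k _
    ⟨List.forall_mem_cons.2 ⟨one_mem H, hH⟩, by simpa using hl⟩

lemma barDifferential_eq_zero {K : List Γ → Prop} {z : List Γ →₀ k} (hz : z ∈ chains k K 0) :
    barDifferential k z = 0 := by
  refine map_eq_zero_of_mem_supported k ?_ hz
  rintro l ⟨-, hl⟩
  simp [List.length_eq_zero_iff.1 hl, barDifferential, simplexBoundary_cons, simplexBoundary_nil]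

variable (k Γ) in
/-- The length of the `j`-th homology of the bar complex of `Γ` with coefficients in `k`. -/
noncomputable def barHomologyLength (j : ℕ) : ℕ∞ :=
  subquotientLength (orderedChains k Γ j ⊓ LinearMap.ker (barDifferential k))
    ((orderedChains k Γ (j + 1)).map (barDifferential k))

end Functoriality

/-- A group `G` on which the permutations of `ℕ` act, together with an invariant subgroup and a
permuted family of subgroups `fix j`. One thinks of `g ∈ fix j` as saying that the position `j` is
not involved in `g`; accordingly an element involving neither of two positions is unchanged when
these are swapped. -/
structure SymmetricGroupSystem (G : Type*) [Group G] where
  ambient : Subgroup G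
  fix : ℕ → Subgroup G
  perm : Equiv.Perm ℕ →* MulAut G
  perm_mem_ambient : ∀ σ {g}, g ∈ ambient → perm σ g ∈ ambient
  perm_mem_fix : ∀ σ {j g}, g ∈ fix j → perm σ g ∈ fix (σ j)
  perm_swap : ∀ {s u g}, g ∈ fix s → g ∈ fix u → perm (Equiv.swap s u) g = g

namespace SymmetricGroupSystem

variable {G : Type*} [Group G] (X : SymmetricGroupSystem G)

/-- The subgroup of the elements involving only positions in `S`. -/
def supportedOn (S : Finset ℕ) : Subgroup G := X.ambient ⊓ ⨅ j ∉ S, X.fix j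

variable {X} {S T : Finset ℕ} {g : G}

lemma mem_supportedOn : g ∈ X.supportedOn S ↔ g ∈ X.ambient ∧ ∀ j ∉ S, g ∈ X.fix j := by
  simp [supportedOn, Subgroup.mem_iInf]

lemma supportedOn_mono : Monotone X.supportedOn := fun _ _ h _ hg =>
  have hg := mem_supportedOn.1 hg
  mem_supportedOn.2 ⟨hg.1, fun j hj => hg.2 j fun hj' => hj (h hj')⟩

lemma mem_supportedOn_erase (a : ℕ) :
    g ∈ X.supportedOn (S.erase a) ↔ g ∈ X.supportedOn S ∧ g ∈ X.fix a := by
  simp only [mem_supportedOn, Finset.mem_erase, not_and_or, not_not, or_imp, forall_and,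
    forall_eq]
  tauto

variable (X) in
lemma perm_mem_supportedOn {σ : Equiv.Perm ℕ} (hσ : ∀ x ∈ S, σ x ∈ T)
    (hg : g ∈ X.supportedOn S) : X.perm σ g ∈ X.supportedOn T := by
  rw [mem_supportedOn] at hg ⊢
  refine ⟨X.perm_mem_ambient σ hg.1, fun j hj => ?_⟩
  simpa using X.perm_mem_fix σ (hg.2 (σ⁻¹ j) fun h => hj (by simpa using hσ _ h))

lemma sup_chains_erase (k : Type*) [CommRing k] (j : ℕ) (A S : Finset ℕ) :
    (A.sup fun a => chains k (fun l => ∀ g ∈ l, g ∈ X.supportedOn (S.erase a)) j) =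
      chains k (InSubgroup fun a : A => X.supportedOn (S.erase a)) j := by
  refine le_antisymm (Finset.sup_le fun a ha => chains_mono (fun l hl => ⟨⟨a, ha⟩, hl⟩) j) ?_
  intro z hz
  refine map_mem_of_mem_supported k (f := LinearMap.id) ?_ hz
  rintro l ⟨⟨a, hl⟩, rfl⟩
  exact Finset.le_sup (f := fun a => chains k (fun l => ∀ g ∈ l, g ∈ X.supportedOn (S.erase a))
    l.length) a.2 (single_mem_chains hl 1)

lemma perm_mapChains_swap (k : Type*) [CommRing k] {j s u : ℕ} (hs : s ∉ S) (hu : u ∉ S)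
    {z : List G →₀ k} (hz : z ∈ chains k (fun l => ∀ g ∈ l, g ∈ X.supportedOn S) j) :
    mapChains k (X.perm (Equiv.swap s u)) z = z := by
  rw [← sub_eq_zero, ← LinearMap.id_apply (R := k) z, ← LinearMap.comp_apply,
    ← LinearMap.sub_apply]
  refine map_eq_zero_of_mem_supported k ?_ hz
  rintro l ⟨hl, -⟩
  have hmap : l.map (X.perm (Equiv.swap s u)) = l :=
    (List.map_congr_left fun g hg => X.perm_swap ((mem_supportedOn.1 (hl g hg)).2 s hs)
      ((mem_supportedOn.1 (hl g hg)).2 u hu)).trans l.map_id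
  simp [hmap]

variable (X)

/-- The bar complexes of the subgroups `X.supportedOn S`. -/
noncomputable def barComplex (k : Type*) [CommRing k] : SymmetricSystem k (List G →₀ k) where
  chains j S := chains k (fun l => ∀ g ∈ l, g ∈ X.supportedOn S) j
  d := barDifferential k
  d_d := barDifferential_barDifferential
  d_mem {j S} z hz := by
    cases j with
    | zero => simp [barDifferential_eq_zero hz]
    | succ j => exact barDifferential_mem_chains _ hz
  d_eq_zero hz := barDifferential_eq_zero hz
  chains_mono j _ _ h := chains_mono (fun _ hl g hg => supportedOn_mono h (hl g hg)) j
  chains_inf_sup_le j A S s z hz := by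
    rw [sup_chains_erase] at hz ⊢
    intro l hl
    obtain ⟨hs, hlen⟩ := hz.1 hl
    obtain ⟨⟨a, ha⟩, -⟩ := hz.2 hl
    exact ⟨⟨a, fun g hg => (mem_supportedOn_erase _).2
      ⟨hs g hg, ((mem_supportedOn_erase _).1 (ha g hg)).2⟩⟩, hlen⟩
  perm :=
    { toFun σ := mapChains k (X.perm σ)
      map_one' := LinearMap.ext fun z => by simpa using mapChains_id z
      map_mul' σ τ := LinearMap.ext fun z => by
        simp only [map_mul, MulAut.coe_mul, Module.End.mul_apply, mapChains_mapChains] }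
  perm_d σ z := (barDifferential_mapChains (X.perm σ).toMonoidHom z).symm
  perm_mem hσ _ hz := mapChains_mem_chains (fun _ hl =>
    List.forall_mem_map.2 fun g hg => X.perm_mem_supportedOn hσ (hl g hg)) hz
  perm_swap hs hu hz := perm_mapChains_swap k hs hu hz

section Embedding

variable {X} {k : Type*} [CommRing k] {Γ : Type*} [Group Γ] {f : Γ →* G} {S : Finset ℕ}
  (hS : f.range = X.supportedOn S)
include hS

lemma barComplex_chains (j : ℕ) :
    (X.barComplex k).chains j S = (orderedChains k Γ j).map (mapChains k f) := by
  refine chains_eq_map_mapChains (fun l' => ?_) j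
  simpa [← hS] using (Set.ext_iff.1 (Set.range_list_map f) l').symm

lemma barComplex_faces {ι : Type*} {e : ι ↪ ℕ} {A : Finset ι} {H : A → Subgroup Γ}
    (hH : ∀ (s : A) g, f g ∈ X.fix (e s) ↔ g ∈ H s) (j : ℕ) :
    (X.barComplex k).faces j (A.map e) S =
      (chains k (InSubgroup H) j).map (mapChains k f) := by
  refine (X.sup_chains_erase k j _ S).trans (chains_eq_map_mapChains (fun l' => ⟨?_, ?_⟩) j)
  · rintro ⟨⟨_, ha⟩, hl'⟩
    obtain ⟨s, hs, rfl⟩ := Finset.mem_map.1 ha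
    simp only [mem_supportedOn_erase, ← hS] at hl'
    obtain ⟨l, rfl⟩ := (Set.ext_iff.1 (Set.range_list_map f) l').2 fun g hg => (hl' g hg).1
    exact ⟨l, ⟨⟨s, hs⟩, fun g hg => (hH _ g).1 (hl' _ (List.mem_map_of_mem hg)).2⟩, rfl⟩
  · rintro ⟨l, ⟨s, hs⟩, rfl⟩
    exact ⟨⟨e s, Finset.mem_map_of_mem e s.2⟩, List.forall_mem_map.2 fun g hg =>
      (mem_supportedOn_erase _).2 ⟨hS ▸ ⟨g, rfl⟩, (hH s g).2 (hs g hg)⟩⟩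

lemma barComplex_relCycles_le_relBoundaries (hf : Function.Injective f) {ι : Type*} {e : ι ↪ ℕ}
    {A : Finset ι} [Nonempty A] {H : A → Subgroup Γ}
    (hH : ∀ (s : A) g, f g ∈ X.fix (e s) ↔ g ∈ H s)
    {c : ℕ} (hc : IsAcyclicBelow k (InCoset H) c) {j : ℕ} (hj : j < c) :
    (X.barComplex k).relCycles j (A.map e) S ≤ (X.barComplex k).relBoundaries j (A.map e) S := by
  rintro _ ⟨hz, hdz⟩
  rw [SetLike.mem_coe, barComplex_chains hS] at hz
  obtain ⟨z, hz, rfl⟩ := hz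
  rw [SetLike.mem_coe, Submodule.mem_comap, barComplex_faces hS hH] at hdz
  obtain ⟨w, hw, hwz⟩ := hdz
  obtain rfl : w = barDifferential k z :=
    mapChains_injective hf (hwz.trans (barDifferential_mapChains f z))
  obtain ⟨y, hy, hyz⟩ := exists_sub_barDifferential_mem hc hj hz (mem_supported_of_mem_chains hw)
  rw [SymmetricSystem.mem_relBoundaries, barComplex_chains hS, barComplex_faces hS hH]
  refine ⟨_, ⟨y, hy, rfl⟩, _, ⟨_, hyz, rfl⟩, ?_⟩
  rw [map_sub, ← barDifferential_mapChains f y]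
  exact add_sub_cancel _ _

lemma barComplex_homologyLength (hf : Function.Injective f) (j : ℕ) :
    (X.barComplex k).homologyLength j ∅ S = barHomologyLength k Γ j := by
  have hcomm : barDifferential k ∘ₗ mapChains k f = mapChains k f ∘ₗ barDifferential k :=
    LinearMap.ext (barDifferential_mapChains f)
  have hZ : (X.barComplex k).relCycles j ∅ S =
      (orderedChains k Γ j ⊓ LinearMap.ker (barDifferential k)).map (mapChains k f) := by
    change (X.barComplex k).chains j S ⊓ LinearMap.ker (barDifferential k) = _
    rw [barComplex_chains hS, Submodule.map_inf_eq_map_inf_comap, ← LinearMap.ker_comp, hcomm,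
      LinearMap.ker_comp_of_ker_eq_bot _ (LinearMap.ker_eq_bot.2 (mapChains_injective hf))]
  have hB : (X.barComplex k).relBoundaries j ∅ S =
      ((orderedChains k Γ (j + 1)).map (barDifferential k)).map (mapChains k f) := by
    change ((X.barComplex k).chains (j + 1) S).map (barDifferential k) ⊔ ⊥ = _
    rw [barComplex_chains hS, sup_bot_eq, ← Submodule.map_comp, hcomm, Submodule.map_comp]
  rw [SymmetricSystem.homologyLength, hZ, hB, barHomologyLength]
  exact (subquotientLength_congr (mapChains k f) (Submodule.map_le_iff_le_comap.1 le_rfl)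
    (fun z _ => (mapChains_injective hf).mem_set_image) le_sup_left).symm

end Embedding

end SymmetricGroupSystem

section InfiniteGeneralLinearGroup

open Matrix

variable {R : Type*} [CommRing R]

/-- The action of the permutations of `ℕ` on the free module `ℕ →₀ R`. -/
noncomputable def permuteCoords : Equiv.Perm ℕ →* ((ℕ →₀ R) ≃ₗ[R] (ℕ →₀ R)) where
  toFun σ := Finsupp.domLCongr σ
  map_one' := LinearEquiv.ext fun _ => Finsupp.ext fun _ => rfl
  map_mul' _ _ := LinearEquiv.ext fun _ => Finsupp.ext fun _ => rfl

lemma permuteCoords_apply (σ : Equiv.Perm ℕ) (v : ℕ →₀ R) (j : ℕ) :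
    permuteCoords σ v j = v (σ⁻¹ j) := rfl

lemma permuteCoords_single (σ : Equiv.Perm ℕ) (j : ℕ) (a : R) :
    permuteCoords σ (Finsupp.single j a) = Finsupp.single (σ j) a := by
  simp [permuteCoords]

lemma permuteCoords_swap (s u : ℕ) (v : ℕ →₀ R) : permuteCoords (Equiv.swap s u) v =
    v + (v s - v u) • (Finsupp.single u 1 - Finsupp.single s 1) := by
  ext j
  rw [permuteCoords_apply, Equiv.swap_inv, Equiv.swap_apply_def]
  simp only [Finsupp.add_apply, Finsupp.smul_apply, Finsupp.sub_apply, Finsupp.single_apply,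
    smul_eq_mul]
  grind

/-- The automorphisms of the free module `ℕ →₀ R` which are congruent to the identity mod `I`. -/
def infiniteCongruenceSubgroup (I : Ideal R) : Subgroup ((ℕ →₀ R) ≃ₗ[R] (ℕ →₀ R)) where
  carrier := {g | ∀ v i, g v i - v i ∈ I}
  one_mem' := by simp
  mul_mem' {a b} ha hb v i := by simpa using I.add_mem (ha (b v) i) (hb v i)
  inv_mem' {a} ha v i := by simpa using I.neg_mem (ha (a⁻¹ v) i)

/-- The automorphisms of the free module `ℕ →₀ R` which fix both the `j`-th basis vector and the
`j`-th coordinate. -/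
def coordStabilizer (R : Type*) [CommRing R] (j : ℕ) : Subgroup ((ℕ →₀ R) ≃ₗ[R] (ℕ →₀ R)) where
  carrier := {g | g (Finsupp.single j 1) = Finsupp.single j 1 ∧ ∀ v, g v j = v j}
  one_mem' := by simp
  mul_mem' := by
    rintro a b ⟨ha, ha'⟩ ⟨hb, hb'⟩
    simp [ha, ha', hb, hb']
  inv_mem' := by
    rintro a ⟨ha, ha'⟩
    exact ⟨(LinearEquiv.symm_apply_eq a).2 ha.symm, fun v => by simpa using (ha' (a⁻¹ v)).symm⟩

lemma conj_permuteCoords_apply (σ : Equiv.Perm ℕ) (g : (ℕ →₀ R) ≃ₗ[R] (ℕ →₀ R)) (v : ℕ →₀ R) :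
    MulAut.conj (permuteCoords σ) g v = permuteCoords σ (g (permuteCoords σ⁻¹ v)) := by
  simp [MulAut.conj_apply]

lemma conj_permuteCoords_swap {s u : ℕ} {g : (ℕ →₀ R) ≃ₗ[R] (ℕ →₀ R)}
    (hs : g ∈ coordStabilizer R s) (hu : g ∈ coordStabilizer R u) :
    MulAut.conj (permuteCoords (Equiv.swap s u)) g = g := by
  refine LinearEquiv.ext fun v => ?_
  rw [conj_permuteCoords_apply, Equiv.swap_inv, permuteCoords_swap, permuteCoords_swap, map_add,
    map_smul, map_sub, hs.1, hu.1]
  ext j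
  simp only [Finsupp.add_apply, Finsupp.smul_apply, Finsupp.sub_apply, smul_eq_mul, hs.2, hu.2,
    Finsupp.single_apply]
  grind

/-- The congruence subgroup of the infinite general linear group, permutations acting by conjugation
with permutation matrices. -/
noncomputable def congruenceSystem (I : Ideal R) :
    SymmetricGroupSystem ((ℕ →₀ R) ≃ₗ[R] (ℕ →₀ R)) where
  ambient := infiniteCongruenceSubgroup I
  fix := coordStabilizer R
  perm := MulAut.conj.comp permuteCoords
  perm_mem_ambient σ g hg v i := by
    have h := hg (permuteCoords σ⁻¹ v) (σ⁻¹ i)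
    rw [permuteCoords_apply _ v, inv_inv, ← Equiv.Perm.mul_apply, mul_inv_cancel,
      Equiv.Perm.one_apply] at h
    rwa [MonoidHom.comp_apply, conj_permuteCoords_apply]
  perm_mem_fix σ j g hg := by
    have hσ : σ⁻¹ (σ j) = j := σ.symm_apply_apply j
    refine ⟨?_, fun v => ?_⟩ <;> rw [MonoidHom.comp_apply, conj_permuteCoords_apply]
    · rw [permuteCoords_single, hσ, hg.1, permuteCoords_single]
    · rw [permuteCoords_apply, hσ, hg.2, permuteCoords_apply, inv_inv]
  perm_swap hs hu := conj_permuteCoords_swap hs hu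

end InfiniteGeneralLinearGroup

section ExtensionByZero

open Matrix

variable {R : Type*} [CommRing R] {ι : Type*} (e : ι ↪ ℕ)

variable (R) in
/-- The coordinates of a vector at the positions in the range of `e`. -/
noncomputable def restrictCoords : (ℕ →₀ R) →ₗ[R] (ι → R) :=
  LinearMap.funLeft R R e ∘ₗ Finsupp.lcoeFun

variable {e} in
lemma restrictCoords_single_of_notMem {j : ℕ} (hj : j ∉ Set.range e) :
    restrictCoords R e (Finsupp.single j 1) = 0 :=
  funext fun i => Finsupp.single_eq_of_ne fun h => hj ⟨i, h⟩

variable [Fintype ι]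

variable (R) in
/-- Extension by zero of a vector from the range of `e`. -/
noncomputable def extendByZero : (ι → R) →ₗ[R] (ℕ →₀ R) :=
  Finsupp.lmapDomain R R e ∘ₗ (Finsupp.linearEquivFunOnFinite R R ι).symm.toLinearMap

@[simp] lemma extendByZero_apply (x : ι → R) (i : ι) : extendByZero R e x (e i) = x i :=
  Finsupp.mapDomain_apply e.injective _ i

variable {e} in
lemma extendByZero_apply_of_notMem (x : ι → R) {j : ℕ} (hj : j ∉ Set.range e) :
    extendByZero R e x j = 0 :=
  Finsupp.mapDomain_of_notMem_range _ _ hj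

@[simp] lemma restrictCoords_extendByZero (x : ι → R) :
    restrictCoords R e (extendByZero R e x) = x :=
  funext fun i => extendByZero_apply e x i

variable [DecidableEq ι]

lemma extendByZero_single (i : ι) :
    extendByZero R e (Pi.single i 1) = Finsupp.single (e i) 1 := by
  simp [extendByZero]

/-- The endomorphism of the free module `ℕ →₀ R` given by a matrix at the positions in the range of
`e`, and by the identity elsewhere. -/
noncomputable def extendMatrix : Matrix ι ι R →* Module.End R (ℕ →₀ R) where
  toFun A := LinearMap.id + extendByZero R e ∘ₗ (A - 1).mulVecLin ∘ₗ restrictCoords R e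
  map_one' := by ext; simp
  map_mul' A B := by
    refine LinearMap.ext fun v => ?_
    simp only [Module.End.mul_apply, LinearMap.add_apply, LinearMap.id_apply, LinearMap.comp_apply,
      mulVecLin_apply, map_add, restrictCoords_extendByZero, add_assoc]
    simp only [← map_add, sub_mulVec, one_mulVec, mulVec_sub, mulVec_mulVec, sub_mul,
      one_mul]
    congr 2
    abel

@[simp] lemma extendMatrix_apply (A : Matrix ι ι R) (v : ℕ →₀ R) (i : ι) :
    extendMatrix e A v (e i) = (A *ᵥ restrictCoords R e v) i := by
  simp [extendMatrix, restrictCoords, LinearMap.funLeft]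

variable {e} in
lemma extendMatrix_apply_of_notMem (A : Matrix ι ι R) (v : ℕ →₀ R) {j : ℕ}
    (hj : j ∉ Set.range e) : extendMatrix e A v j = v j := by
  simp [extendMatrix, extendByZero_apply_of_notMem _ hj]

lemma extendMatrix_extendByZero (A : Matrix ι ι R) (x : ι → R) :
    extendMatrix e A (extendByZero R e x) = extendByZero R e (A *ᵥ x) := by
  simp [extendMatrix]

lemma extendMatrix_injective : Function.Injective (extendMatrix (R := R) e) := by
  intro A B h
  refine Matrix.ext_of_mulVec_single fun i => ?_
  simpa [extendMatrix_extendByZero] using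
    congr(restrictCoords R e ($h (extendByZero R e (Pi.single i 1))))

variable (I : Ideal R)

/-- The embedding of the congruence subgroup of finite rank as the automorphisms supported on the
range of `e`. -/
noncomputable def extendCongruence :
    principalCongruenceSubgroup ι I →* ((ℕ →₀ R) ≃ₗ[R] (ℕ →₀ R)) :=
  (LinearMap.GeneralLinearGroup.generalLinearEquiv R (ℕ →₀ R)).toMonoidHom.comp
    ((Units.map (extendMatrix e)).comp (principalCongruenceSubgroup ι I).subtype)

variable {I}

lemma extendCongruence_apply (g : principalCongruenceSubgroup ι I) (v : ℕ →₀ R) :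
    extendCongruence e I g v = extendMatrix e g.1.1 v := rfl

lemma extendCongruence_injective : Function.Injective (extendCongruence e I) := fun _ _ h =>
  Subtype.ext <| Units.ext <| extendMatrix_injective e <| LinearMap.ext fun v =>
    congr($h v)

lemma extendCongruence_mem_supportedOn (g : principalCongruenceSubgroup ι I) :
    extendCongruence e I g ∈ (congruenceSystem I).supportedOn (Finset.univ.map e) := by
  refine SymmetricGroupSystem.mem_supportedOn.2 ⟨fun v j => ?_, fun j hj => ?_⟩
  · rw [extendCongruence_apply]
    by_cases hj : j ∈ Set.range e
    · obtain ⟨i, rfl⟩ := hj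
      rw [extendMatrix_apply]
      exact Ideal.Quotient.eq.1 (congrFun (mk_comp_mulVec g.2 (restrictCoords R e v)) i)
    · simp [extendMatrix_apply_of_notMem _ _ hj]
  · replace hj : j ∉ Set.range e := by simpa using hj
    refine ⟨?_, fun v => extendMatrix_apply_of_notMem _ v hj⟩
    simp [extendCongruence_apply, extendMatrix, restrictCoords_single_of_notMem hj]

variable {e} in
lemma exists_extendMatrix_eq {g : (ℕ →₀ R) ≃ₗ[R] (ℕ →₀ R)}
    (hg : g ∈ (congruenceSystem I).supportedOn (Finset.univ.map e)) :
    ∃ A, extendMatrix e A = g.toLinearMap := by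
  replace hg : ∀ j ∉ Set.range e, g ∈ coordStabilizer R j := fun j hj =>
    (SymmetricGroupSystem.mem_supportedOn.1 hg).2 j (by simpa using hj)
  refine ⟨of fun i i' => g (Finsupp.single (e i') 1) (e i),
    Finsupp.lhom_ext' fun j => LinearMap.ext_ring (Finsupp.ext fun j' => ?_)⟩
  simp only [LinearMap.comp_apply, Finsupp.lsingle_apply, LinearEquiv.coe_coe]
  by_cases hj' : j' ∈ Set.range e
  swap
  · rw [extendMatrix_apply_of_notMem _ _ hj', (hg j' hj').2]
  obtain ⟨i, rfl⟩ := hj'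
  by_cases hj : j ∈ Set.range e
  · obtain ⟨i', rfl⟩ := hj
    rw [extendMatrix_apply, ← extendByZero_single, restrictCoords_extendByZero]
    simp [extendByZero_single]
  · rw [(hg j hj).1, extendMatrix_apply, restrictCoords_single_of_notMem hj, mulVec_zero]
    exact (Finsupp.single_eq_of_ne fun h => hj ⟨i, h⟩).symm

variable (I) in
lemma range_extendCongruence :
    (extendCongruence e I).range = (congruenceSystem I).supportedOn (Finset.univ.map e) := by
  refine le_antisymm ?_ fun g hg => ?_
  · rintro _ ⟨g, rfl⟩
    exact extendCongruence_mem_supportedOn e g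
  obtain ⟨A, hA⟩ := exists_extendMatrix_eq hg
  obtain ⟨B, hB⟩ := exists_extendMatrix_eq (inv_mem hg)
  have hAB : A * B = 1 := extendMatrix_injective e <| by
    rw [map_mul, hA, hB, map_one]
    exact LinearMap.ext g.apply_symm_apply
  have hBA : B * A = 1 := extendMatrix_injective e <| by
    rw [map_mul, hA, hB, map_one]
    exact LinearMap.ext g.symm_apply_apply
  have hmem : (⟨A, B, hAB, hBA⟩ : GL ι R) ∈ principalCongruenceSubgroup ι I := by
    refine mem_principalCongruenceSubgroup.2 fun i i' => ?_
    have h := (SymmetricGroupSystem.mem_supportedOn.1 hg).1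
      (extendByZero R e (Pi.single i' 1)) (e i)
    rw [← LinearEquiv.coe_coe, ← hA, extendMatrix_apply] at h
    simpa [one_apply, Pi.single_apply] using h
  exact ⟨⟨_, hmem⟩, LinearEquiv.ext fun v => congr($hA v)⟩

lemma extendCongruence_mem_fix_iff {A : Finset ι} {s : A} {g : principalCongruenceSubgroup ι I} :
    extendCongruence e I g ∈ (congruenceSystem I).fix (e s) ↔ g ∈ DualPair.stdStabilizer I s := by
  rw [DualPair.mem_stdStabilizer]
  refine and_congr ?_ ?_
  · rw [← extendByZero_single, extendCongruence_apply, extendMatrix_extendByZero]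
    exact (Function.LeftInverse.injective (restrictCoords_extendByZero e)).eq_iff
  · refine ⟨fun h => funext fun i => ?_, fun h v => ?_⟩
    · have hi := h (extendByZero R e (Pi.single i 1))
      rw [extendCongruence_apply, extendMatrix_extendByZero] at hi
      simpa [Pi.single_apply, eq_comm] using hi
    · rw [extendCongruence_apply, extendMatrix_apply, ← single_one_dotProduct s.1 (g.1.1 *ᵥ _),
        dotProduct_mulVec, h, single_one_dotProduct]
      rfl

end ExtensionByZero

section CongruenceSystem

variable (k : Type*) [CommRing k] {R : Type*} [CommRing R] {I : Ideal R}

theorem vanishesFrom_congruenceSystem [IsDedekindDomain R] (hI : I ≠ ⊤) (j : ℕ) :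
    ((congruenceSystem I).barComplex k).VanishesFrom j (4 * j + 8) := by
  intro A S hAS hA
  let e : S ↪ ℕ := Function.Embedding.subtype (· ∈ S)
  have hS : Finset.univ.map e = S := S.attach_map_val
  have hAe : (A.subtype (· ∈ S)).map e = A := Finset.subtype_map_of_mem hAS
  have hcard : 4 * (j + 1) + 4 ≤ (A.subtype (· ∈ S)).card := by
    rw [← Finset.card_map e, hAe]
    omega
  have : Nonempty (A.subtype (· ∈ S)) := Finset.card_pos.1 (by omega) |>.to_subtype
  have hrange : (extendCongruence e I).range = (congruenceSystem I).supportedOn S := by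
    rw [range_extendCongruence, hS]
  simpa only [hAe] using SymmetricGroupSystem.barComplex_relCycles_le_relBoundaries hrange
    (extendCongruence_injective e) (fun _ _ => extendCongruence_mem_fix_iff e)
    (isAcyclicBelow_inCoset_stdStabilizer k hI hcard) j.lt_succ_self

lemma homologyLength_congruenceSystem (n j : ℕ) :
    ((congruenceSystem I).barComplex k).homologyLength j ∅ (Finset.range n) =
      barHomologyLength k (principalCongruenceSubgroup (Fin n) I) j := by
  refine SymmetricGroupSystem.barComplex_homologyLength ?_
    (extendCongruence_injective Fin.valEmbedding) j
  rw [range_extendCongruence]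
  congr 1
  ext i
  simp

end CongruenceSystem

section Nerve

variable {G : Type*} [Group G] {p : ℕ}

/-- The homogeneous coordinates of a simplex of the nerve of `G`, normalised to start with `1`;
the inverse turns the morphism from vertex `i` to vertex `j` into `g_j⁻¹ * g_i`. -/
def vertex (F : ComposableArrows (SingleObj G) p) (i : Fin (p + 1)) : G :=
  (F.map (homOfLE (Fin.zero_le i)) : G)⁻¹

/-- The bar chain generator of a simplex of the nerve of `G`: its vertices except the first, which
is `1`. -/
def vertexList (F : ComposableArrows (SingleObj G) p) : List G :=
  List.ofFn fun i : Fin p => vertex F i.succ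

lemma vertex_zero (F : ComposableArrows (SingleObj G) p) : vertex F 0 = 1 :=
  inv_eq_one.2 (F.map_id 0)

lemma one_cons_vertexList (F : ComposableArrows (SingleObj G) p) :
    1 :: vertexList F = List.ofFn (vertex F) := by
  rw [List.ofFn_succ, vertex_zero, vertexList]

lemma map_eq_vertex (F : ComposableArrows (SingleObj G) p) {i j : Fin (p + 1)} (f : i ⟶ j) :
    (F.map f : G) = (vertex F j)⁻¹ * vertex F i := by
  have hcomp : (F.map f : G) * (F.map (homOfLE (Fin.zero_le i)) : G) =
      (F.map (homOfLE (Fin.zero_le j)) : G) := (F.map_comp _ f).symm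
  rw [vertex, vertex, inv_inv]
  exact eq_mul_inv_of_mul_eq hcomp

lemma vertexList_injective : Function.Injective (vertexList (G := G) (p := p)) := by
  intro F F' h
  have hvertex : vertex F = vertex F' := by
    rw [← List.ofFn_inj, ← one_cons_vertexList, ← one_cons_vertexList, h]
  refine Functor.hext (fun _ => rfl) fun i j f => heq_of_eq ?_
  exact (map_eq_vertex F f).trans (hvertex ▸ (map_eq_vertex F' f).symm)

/-- The simplex of the nerve of `G` with the given homogeneous coordinates. -/
def simplexOfVertices (w : Fin (p + 1) → G) : ComposableArrows (SingleObj G) p where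
  obj _ := SingleObj.star G
  map {i j} _ := ((w j)⁻¹ * w i : G)
  map_id i := inv_mul_cancel (w i)
  map_comp {i j l} _ _ := show (w l)⁻¹ * w i = (w l)⁻¹ * w j * ((w j)⁻¹ * w i) by group

lemma vertex_simplexOfVertices (w : Fin (p + 1) → G) (i : Fin (p + 1)) :
    vertex (simplexOfVertices w) i = (w 0)⁻¹ * w i :=
  show ((w i)⁻¹ * w 0)⁻¹ = (w 0)⁻¹ * w i by group

lemma range_vertexList : Set.range (vertexList (G := G) (p := p)) = {l | l.length = p} := by
  refine Set.Subset.antisymm (Set.range_subset_iff.2 fun F => List.length_ofFn) ?_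
  rintro l rfl
  refine ⟨simplexOfVertices (Fin.cons 1 l.get), ?_⟩
  simp only [vertexList, vertex_simplexOfVertices, Fin.cons_zero, Fin.cons_succ, inv_one, one_mul,
    List.ofFn_get]

lemma vertex_δ (F : ComposableArrows (SingleObj G) (p + 1)) (i : Fin (p + 2)) (j : Fin (p + 1)) :
    vertex ((nerve (SingleObj G)).δ i F : ComposableArrows (SingleObj G) p) j =
      (vertex F (i.succAbove 0))⁻¹ * vertex F (i.succAbove j) := by
  change (F.map (homOfLE ((Fin.strictMono_succAbove i).monotone (Fin.zero_le j))) : G)⁻¹ = _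
  rw [map_eq_vertex, mul_inv_rev, inv_inv]

end Nerve

section BarDifferential

variable (k : Type*) [CommRing k]

lemma simplexBoundary_ofFn {V : Type*} {n : ℕ} (w : Fin (n + 1) → V) :
    simplexBoundary k (List.ofFn w) =
      ∑ i : Fin (n + 1), (-1 : k) ^ (i : ℕ) • Finsupp.single (List.ofFn (w ∘ i.succAbove)) 1 := by
  induction n with
  | zero => simp [simplexBoundary_cons, simplexBoundary_nil]
  | succ n ih =>
    rw [Fin.sum_univ_succ, List.ofFn_succ, simplexBoundary_cons, ih, map_sum, sub_eq_add_neg,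
      ← Finset.sum_neg_distrib]
    congr 1
    · simp [Function.comp_def]
    · refine Finset.sum_congr rfl fun i _ => ?_
      rw [map_smul, cone_single, List.ofFn_succ (f := w ∘ i.succ.succAbove)]
      simp [pow_succ, Function.comp_def]

lemma barDifferential_single_vertexList {G : Type*} [Group G] {p : ℕ}
    (F : ComposableArrows (SingleObj G) (p + 1)) :
    barDifferential k (Finsupp.single (vertexList F) 1) =
      ∑ i : Fin (p + 2), (-1 : k) ^ (i : ℕ) • Finsupp.single
        (vertexList ((nerve (SingleObj G)).δ i F : ComposableArrows (SingleObj G) p)) 1 := by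
  rw [barDifferential, LinearMap.comp_apply, LinearMap.comp_apply, cone_single,
    one_cons_vertexList, boundary_single, one_smul, simplexBoundary_ofFn, map_sum]
  refine Finset.sum_congr rfl fun i _ => ?_
  rw [map_smul, List.ofFn_succ, coinvariants_single_cons, List.map_ofFn]
  congr 3
  funext j
  exact (vertex_δ F i j.succ).symm

end BarDifferential

section NerveChains

variable (k : Type) [CommRing k] (G : Type) [Group G]

/-- The complex of simplicial chains on the nerve of `G`. -/
noncomputable abbrev nerveComplex : ChainComplex (ModuleCat k) ℕ :=
  (alternatingFaceMapComplex (ModuleCat k)).obj (barChains k G)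

variable {G} in
/-- The basis element of `nerveComplex k G` given by a simplex. -/
noncomputable def nerveSingle {p : ℕ} (F : ComposableArrows (SingleObj G) p) :
    (nerveComplex k G).X p :=
  (Finsupp.single F 1 : ComposableArrows (SingleObj G) p →₀ k)

/-- The comparison map from simplicial chains on the nerve to bar chains. -/
noncomputable def toBarChains (p : ℕ) : (nerveComplex k G).X p →ₗ[k] (List G →₀ k) :=
  Finsupp.lmapDomain (α := ComposableArrows (SingleObj G) p) k k vertexList

variable {k G} {p : ℕ}

lemma nerveComplex_hom_ext {M : Type*} [AddCommGroup M] [Module k M]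
    {f g : (nerveComplex k G).X p →ₗ[k] M} (h : ∀ F, f (nerveSingle k F) = g (nerveSingle k F)) :
    f = g :=
  Finsupp.lhom_ext' (α := ComposableArrows (SingleObj G) p) (M := k)
    fun F => LinearMap.ext_ring (h F)

lemma nerveComplex_d_single (F : ComposableArrows (SingleObj G) (p + 1)) :
    ((nerveComplex k G).d (p + 1) p).hom (nerveSingle k F) =
      ∑ i : Fin (p + 2), (-1 : ℤ) ^ (i : ℕ) •
        (nerveSingle k ((nerve (SingleObj G)).δ i F) : (nerveComplex k G).X p) := by
  have hface (i : Fin (p + 2)) : ((barChains k G).δ i).hom (nerveSingle k F) =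
      nerveSingle k ((nerve (SingleObj G)).δ i F) := Finsupp.mapDomain_single
  have hd : ((nerveComplex k G).d (p + 1) p).hom =
      ∑ i : Fin (p + 2), (-1 : ℤ) ^ (i : ℕ) • ((barChains k G).δ i).hom :=
    (congrArg ModuleCat.Hom.hom (alternatingFaceMapComplex_obj_d _ _)).trans
      (ModuleCat.hom_sum _ _)
  refine (LinearMap.congr_fun hd _).trans <| (LinearMap.sum_apply _ _ _).trans ?_
  exact Finset.sum_congr rfl fun i _ => congrArg ((-1 : ℤ) ^ (i : ℕ) • ·) (hface i)

lemma toBarChains_single (F : ComposableArrows (SingleObj G) p) :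
    toBarChains k G p (nerveSingle k F) = Finsupp.single (vertexList F) 1 :=
  Finsupp.mapDomain_single

lemma toBarChains_injective : Function.Injective (toBarChains k G p) :=
  Finsupp.mapDomain_injective vertexList_injective

lemma range_toBarChains : LinearMap.range (toBarChains k G p) = orderedChains k G p := by
  have h := Finsupp.lmapDomain_supported k k (vertexList (G := G) (p := p)) Set.univ
  rw [Finsupp.supported_univ, Submodule.map_top, Set.image_univ, range_vertexList] at h
  simp only [orderedChains, chains, true_and]
  exact h

lemma toBarChains_mem (z : (nerveComplex k G).X p) : toBarChains k G p z ∈ orderedChains k G p :=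
  range_toBarChains.le ⟨z, rfl⟩

lemma toBarChains_d (z : (nerveComplex k G).X (p + 1)) :
    toBarChains k G p (((nerveComplex k G).d (p + 1) p).hom z) =
      barDifferential k (toBarChains k G (p + 1) z) := by
  suffices h : toBarChains k G p ∘ₗ ((nerveComplex k G).d (p + 1) p).hom =
      barDifferential k ∘ₗ toBarChains k G (p + 1) from LinearMap.congr_fun h z
  refine nerveComplex_hom_ext fun F => ?_
  rw [LinearMap.comp_apply, LinearMap.comp_apply, nerveComplex_d_single, toBarChains_single,
    barDifferential_single_vertexList, map_sum]
  refine Finset.sum_congr rfl fun i _ => ?_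
  refine (map_zsmul _ _ _).trans ?_
  rw [← Int.cast_smul_eq_zsmul k, Int.cast_pow, Int.cast_neg, Int.cast_one]
  exact congrArg ((-1 : k) ^ (i : ℕ) • ·) (toBarChains_single _)

end NerveChains

section Homology

variable {k : Type} [CommRing k]

lemma length_moduleCat_homology (S : ShortComplex (ModuleCat.{0} k)) :
    Module.length k S.homology =
      subquotientLength (LinearMap.ker S.g.hom) (LinearMap.range S.f.hom) := by
  have hrange : LinearMap.range S.moduleCatToCycles =
      (LinearMap.range S.f.hom).submoduleOf (LinearMap.ker S.g.hom) := by
    ext z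
    simp only [Submodule.submoduleOf, Submodule.mem_comap, LinearMap.mem_range, Subtype.ext_iff]
    rfl
  exact (S.moduleCatHomologyIso.toLinearEquiv.trans
    (Submodule.quotEquivOfEq _ _ hrange)).length_eq

variable (k) (G : Type) [Group G]

variable {G} in
lemma barDifferential_toBarChains_eq_zero {j : ℕ} (z : (nerveComplex k G).X j) :
    barDifferential k (toBarChains k G j z) = 0 ↔
      ((nerveComplex k G).d j ((ComplexShape.down ℕ).next j)).hom z = 0 := by
  cases j with
  | zero =>
    have hd : (nerveComplex k G).d 0 ((ComplexShape.down ℕ).next 0) = 0 :=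
      (nerveComplex k G).shape _ _ (by simp)
    exact iff_of_true (barDifferential_eq_zero (toBarChains_mem z)) (by rw [hd]; rfl)
  | succ j =>
    rw [ChainComplex.next_nat_succ, ← toBarChains_d]
    exact map_eq_zero_iff _ toBarChains_injective

theorem length_grpHomology (j : ℕ) :
    Module.length k (grpHomology k G j) = barHomologyLength k G j := by
  let e : grpHomology k G j ≅ ((nerveComplex k G).sc' (j + 1) j _).homology :=
    (nerveComplex k G).homologyIsoSc' (j + 1) j _ (ChainComplex.prev ℕ j) rfl
  refine e.toLinearEquiv.length_eq.trans <| (length_moduleCat_homology _).trans <|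
    subquotientLength_congr (toBarChains k G j) (fun z hz =>
      ⟨toBarChains_mem z, (barDifferential_toBarChains_eq_zero k z).2 hz⟩) (fun z _ => ?_) ?_
  · rw [← range_toBarChains]
    constructor
    · rintro ⟨_, ⟨y, rfl⟩, h⟩
      exact ⟨y, toBarChains_injective ((toBarChains_d y).trans h)⟩
    · rintro ⟨y, rfl⟩
      exact ⟨_, ⟨y, rfl⟩, (toBarChains_d y).symm⟩
  · rw [← range_toBarChains]
    rintro _ ⟨⟨y, rfl⟩, hy⟩
    exact Submodule.mem_sup_left ⟨y, (barDifferential_toBarChains_eq_zero k y).1 hy, rfl⟩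

end Homology

end CongruenceHomology

open CongruenceHomology in
theorem stmt6_general {R : Type} [CommRing R] [IsDedekindDomain R] {I : Ideal R} (hI : I ≠ ⊤)
    (k : Type) [CommRing k] (i : ℕ) :
    IsEventuallyTopOrPolynomial fun n =>
      Module.length k (grpHomology k (principalCongruenceSubgroup (Fin n) I) i) := by
  simp only [length_grpHomology, ← homologyLength_congruenceSystem]
  exact SymmetricSystem.isEventuallyTopOrPolynomial_homologyLength
    (fun j => ⟨_, vanishesFrom_congruenceSystem k hI j⟩) i

/-- The mod-`k` Betti numbers of the congruence subgroups `Γ_n(𝔭)` are eventually given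
by a polynomial in `n` with rational coefficients. -/
theorem stmt6 (K : Type) [Field K] [NumberField K]
    (𝔭 : Ideal (NumberField.RingOfIntegers K)) (h𝔭 : 𝔭 ≠ ⊤) (i : ℕ)
    (k : Type) [Field k] :
    ∃ (P : Polynomial ℚ) (N : ℕ), ∀ n ≥ N,
      (Module.finrank k (grpHomology k (congruenceSubgroup K 𝔭 n) i) : ℚ) =
        P.eval (n : ℚ) := by
  simp only [← CongruenceHomology.toNat_length]
  exact (stmt6_general h𝔭 k i).exists_toNat_eq_eval
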